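/- arXiv:2506.07163 — 4 statements merged into one kernel-verified Lean document; each statement's English description precedes it below -/
import Mathlib

section
/- Let G be a finite directed multigraph and let μ and μ' be two multi-loops in G having the same edge multiplicity function (i.e. every directed edge of G is traversed the same total number of times by the loops of μ as by the loops of μ'). Then there exists a finite sequence of multi-loops μ = μ₀, μ₁, …, μ_n = μ' such that for each i ∈ {1, …, n} the multi-loops μ_{i−1} and μ_i are related by a resolution at some vertex of G. -/
/-- A (based) loop in the directed multigraph with edge set `E`, source map `src` and
target map `tgt`: a nonempty list of edges forming a closed directed walk. -/
def IsLoop {V E : Type*} (src tgt : E → V) (l : List E) : Prop :=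
  l ≠ [] ∧ ∀ i : Fin l.length,
    tgt (l.get i) =
      src (l.get ⟨(i.1 + 1) % l.length, Nat.mod_lt _ (lt_of_le_of_lt (Nat.zero_le _) i.isLt)⟩)

/-- Based loops up to cyclic rotation. -/
def loopSetoid {V E : Type*} (src tgt : E → V) : Setoid {l : List E // IsLoop src tgt l} where
  r a b := a.1.IsRotated b.1
  iseqv := ⟨fun a => List.IsRotated.refl a.1, fun h => h.symm, fun h h' => h.trans h'⟩

/-- A loop of the directed multigraph: a closed directed walk considered up to
cyclic rotation. -/
def Loop {V E : Type*} (src tgt : E → V) : Type _ := Quotient (loopSetoid src tgt)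

/-- The loop determined by a based loop. -/
def Loop.mk {V E : Type*} (src tgt : E → V) (l : List E) (h : IsLoop src tgt l) :
    Loop src tgt :=
  Quotient.mk (loopSetoid src tgt) ⟨l, h⟩

/-- The number of times the loop `c` traverses the edge `e`. -/
def Loop.edgeCount {V E : Type*} [DecidableEq E] {src tgt : E → V}
    (c : Loop src tgt) (e : E) : ℕ :=
  Quotient.lift (s := loopSetoid src tgt) (fun l : {l : List E // IsLoop src tgt l} => l.1.count e)
    (fun a b h => ((show a.1 ~r b.1 from h).perm).count_eq e) c

/-- The number of times the loop `c` visits the vertex `v`. -/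
def Loop.vertexCount {V E : Type*} [DecidableEq V] {src tgt : E → V}
    (c : Loop src tgt) (v : V) : ℕ :=
  Quotient.lift (s := loopSetoid src tgt) (fun l : {l : List E // IsLoop src tgt l} => (l.1.map src).count v)
    (fun a b h => (((show a.1 ~r b.1 from h).map src).perm).count_eq v) c

/-- A multi-loop: a finite multiset of loops. -/
abbrev MultiLoop {V E : Type*} (src tgt : E → V) := Multiset (Loop src tgt)

/-- The edge multiplicity function of a multi-loop: the total number of times the
edge `e` is traversed by the loops of `μ`. -/
def MultiLoop.edgeCount {V E : Type*} [DecidableEq E] {src tgt : E → V}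
    (μ : MultiLoop src tgt) (e : E) : ℕ :=
  (μ.map (fun c => Loop.edgeCount c e)).sum

/-- The total number of times the loops of `μ` visit the vertex `v`. -/
def MultiLoop.vertexCount {V E : Type*} [DecidableEq V] {src tgt : E → V}
    (μ : MultiLoop src tgt) (v : V) : ℕ :=
  (μ.map (fun c => Loop.vertexCount c v)).sum

/-- A multi-loop is embedded if its loops visit each vertex at most once in total. -/
def MultiLoop.Embedded {V E : Type*} [DecidableEq V] {src tgt : E → V}
    (μ : MultiLoop src tgt) : Prop :=
  ∀ v : V, MultiLoop.vertexCount μ v ≤ 1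

/-- `μ'` is obtained from `μ` by a resolution at the vertex `v`: two loops `c₁`, `c₂` of `μ`,
presented with starting points chosen so that `c₁` ends at `v` and `c₂` starts at `v`,
are replaced by the single concatenated loop `c₁ * c₂`. -/
def ResolutionAt {V E : Type*} {src tgt : E → V} (v : V) (μ μ' : MultiLoop src tgt) : Prop :=
  ∃ (l₁ l₂ : List E) (h₁ : IsLoop src tgt l₁) (h₂ : IsLoop src tgt l₂)
    (h₁₂ : IsLoop src tgt (l₁ ++ l₂)) (μ₀ : MultiLoop src tgt),
    (∃ e, l₁.getLast? = some e ∧ tgt e = v) ∧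
    (∃ e, l₂.head? = some e ∧ src e = v) ∧
    μ = Loop.mk src tgt l₁ h₁ ::ₘ Loop.mk src tgt l₂ h₂ ::ₘ μ₀ ∧
    μ' = Loop.mk src tgt (l₁ ++ l₂) h₁₂ ::ₘ μ₀

/-!
Let `c` be a loop of `μ'`. Its edges are available in `μ`, so `c` can be built inside `μ` one edge
at a time: if some loop of the current multi-loop reads `w * r` with `w` an initial part of `c`, and
`f` is the next edge of `c`, then `f` occurs either in `r`, say `r = a * f * b`, and the closed walk
`a` is split off, or in another loop `f * b`, which is spliced in between `w` and `r`. Once `w` is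
all of `c`, the remaining closed walk `r` is split off. Resolutions preserve edge multiplicities, so
`c` can be cancelled on both sides and the argument repeated.
-/

section IsWalk

variable {V E : Type*} {src tgt : E → V}

/-- `IsWalk src tgt u l v` says that the edges of `l`, traversed in order, form a directed walk from
`u` to `v`. Unlike for `IsLoop`, the list may be empty, which gives the constant walks. -/
def IsWalk (src tgt : E → V) : V → List E → V → Prop
  | u, [], v => u = v
  | u, e :: l, v => src e = u ∧ IsWalk src tgt (tgt e) l v

theorem isWalk_append {l₁ l₂ : List E} {u v : V} :
    IsWalk src tgt u (l₁ ++ l₂) v ↔ ∃ x, IsWalk src tgt u l₁ x ∧ IsWalk src tgt x l₂ v := by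
  induction l₁ generalizing u with
  | nil => simp [IsWalk]
  | cons e l₁ ih => simp [IsWalk, ih, and_assoc]

theorem IsWalk.append {l₁ l₂ : List E} {u v w : V} (h₁ : IsWalk src tgt u l₁ v)
    (h₂ : IsWalk src tgt v l₂ w) : IsWalk src tgt u (l₁ ++ l₂) w :=
  isWalk_append.2 ⟨v, h₁, h₂⟩

theorem isWalk_concat {l : List E} {f : E} {u v : V} :
    IsWalk src tgt u (l ++ [f]) v ↔ IsWalk src tgt u l (src f) ∧ tgt f = v := by
  simp [isWalk_append, IsWalk]

theorem isWalk_iff_map {l : List E} {u v : V} :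
    IsWalk src tgt u l v ↔ l.map src ++ [v] = u :: l.map tgt := by
  induction l generalizing u with
  | nil => simp [IsWalk, eq_comm]
  | cons e l ih => simp [IsWalk, ih]

theorem isLoop_iff_map_rotate {l : List E} :
    IsLoop src tgt l ↔ l ≠ [] ∧ l.map tgt = (l.map src).rotate 1 := by
  refine and_congr_right fun _ => ?_
  simp [List.ext_getElem_iff, List.getElem_rotate, Fin.forall_iff]

theorem isLoop_iff_isWalk {l : List E} :
    IsLoop src tgt l ↔ l ≠ [] ∧ ∃ u, IsWalk src tgt u l u := by
  cases l <;> simp [isLoop_iff_map_rotate, isWalk_iff_map, eq_comm]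

theorem IsLoop.of_isRotated {l l' : List E} (hl : IsLoop src tgt l) (h : l ~r l') :
    IsLoop src tgt l' := by
  obtain ⟨n, rfl⟩ := h
  rw [isLoop_iff_map_rotate] at hl ⊢
  refine ⟨mt List.rotate_eq_nil_iff.1 hl.1, ?_⟩
  rw [List.map_rotate, List.map_rotate, hl.2, List.rotate_rotate, List.rotate_rotate, add_comm]

end IsWalk

namespace MultiLoop

variable {V E : Type*} {src tgt : E → V}

open Classical in
/-- The multi-loop consisting of the single loop traced out by `l`. If `l` is not a loop, in
particular if `l` is empty, it is the empty multi-loop: constant walks contribute no loop, so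
splitting and splicing closed walks needs no non-emptiness assumptions. -/
noncomputable def ofList (src tgt : E → V) (l : List E) : MultiLoop src tgt :=
  if hl : IsLoop src tgt l then {Loop.mk src tgt l hl} else 0

theorem ofList_of_isLoop {l : List E} (hl : IsLoop src tgt l) :
    ofList src tgt l = {Loop.mk src tgt l hl} :=
  dif_pos hl

@[simp]
theorem ofList_nil : ofList src tgt [] = 0 :=
  dif_neg fun h => h.1 rfl

theorem ofList_eq_of_isRotated {l l' : List E} (h : l ~r l') :
    ofList src tgt l = ofList src tgt l' := by
  by_cases hl : IsLoop src tgt l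
  · rw [ofList_of_isLoop hl, ofList_of_isLoop (hl.of_isRotated h)]
    exact congrArg _ (Quotient.sound h)
  · rw [ofList, dif_neg hl, ofList, dif_neg fun hl' => hl (hl'.of_isRotated h.symm)]

theorem exists_singleton_eq_ofList (c : Loop src tgt) :
    ∃ l, IsLoop src tgt l ∧ ({c} : MultiLoop src tgt) = ofList src tgt l := by
  obtain ⟨⟨l, hl⟩, rfl⟩ := Quotient.exists_rep c
  exact ⟨l, hl, (ofList_of_isLoop hl).symm⟩

/-- Two multi-loops are resolution equivalent if they are joined by a finite chain of multi-loops in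
which consecutive terms are related by a resolution, in either direction, at some vertex. -/
abbrev ResolutionEquiv (μ μ' : MultiLoop src tgt) : Prop :=
  Relation.ReflTransGen
    (fun a b : MultiLoop src tgt => ∃ v : V, ResolutionAt v a b ∨ ResolutionAt v b a) μ μ'

theorem ResolutionEquiv.symm {μ μ' : MultiLoop src tgt} (h : ResolutionEquiv μ μ') :
    ResolutionEquiv μ' μ :=
  have : Std.Symm fun a b : MultiLoop src tgt =>
      ∃ v : V, ResolutionAt v a b ∨ ResolutionAt v b a :=
    ⟨fun _ _ ⟨v, hv⟩ => ⟨v, hv.symm⟩⟩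
  Std.Symm.symm _ _ h

theorem _root_.ResolutionAt.add_right {v : V} {μ μ' : MultiLoop src tgt} (h : ResolutionAt v μ μ')
    (ν : MultiLoop src tgt) : ResolutionAt v (μ + ν) (μ' + ν) := by
  obtain ⟨l₁, l₂, h₁, h₂, h₁₂, μ₀, hlast, hhead, rfl, rfl⟩ := h
  exact ⟨l₁, l₂, h₁, h₂, h₁₂, μ₀ + ν, hlast, hhead, by simp, by simp⟩

theorem ResolutionEquiv.add_right {μ μ' : MultiLoop src tgt} (h : ResolutionEquiv μ μ')
    (ν : MultiLoop src tgt) : ResolutionEquiv (μ + ν) (μ' + ν) :=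
  Relation.ReflTransGen.lift (· + ν)
    (fun _ _ ⟨v, hv⟩ => ⟨v, hv.imp (·.add_right ν) (·.add_right ν)⟩) _ _ h

theorem ResolutionEquiv.add_left {μ μ' : MultiLoop src tgt} (h : ResolutionEquiv μ μ')
    (ν : MultiLoop src tgt) : ResolutionEquiv (ν + μ) (ν + μ') := by
  simpa only [add_comm ν] using h.add_right ν

theorem resolutionAt_ofList {l₁ l₂ : List E} {u : V} (hl₁ : l₁ ≠ []) (hl₂ : l₂ ≠ [])
    (h₁ : IsWalk src tgt u l₁ u) (h₂ : IsWalk src tgt u l₂ u) :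
    ResolutionAt u (ofList src tgt l₁ + ofList src tgt l₂) (ofList src tgt (l₁ ++ l₂)) := by
  have loop₁ : IsLoop src tgt l₁ := isLoop_iff_isWalk.2 ⟨hl₁, u, h₁⟩
  have loop₂ : IsLoop src tgt l₂ := isLoop_iff_isWalk.2 ⟨hl₂, u, h₂⟩
  have loop₁₂ : IsLoop src tgt (l₁ ++ l₂) :=
    isLoop_iff_isWalk.2 ⟨by simp [hl₁], u, h₁.append h₂⟩
  rw [ofList_of_isLoop loop₁, ofList_of_isLoop loop₂, ofList_of_isLoop loop₁₂]
  refine ⟨l₁, l₂, loop₁, loop₂, loop₁₂, 0, ?_, ?_, rfl, rfl⟩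
  · obtain rfl | ⟨l, e, rfl⟩ := l₁.eq_nil_or_concat'
    · exact absurd rfl hl₁
    · exact ⟨e, by simp, (isWalk_concat.1 h₁).2⟩
  · obtain ⟨e, l, rfl⟩ := List.exists_cons_of_ne_nil hl₂
    exact ⟨e, rfl, h₂.1⟩

theorem resolutionEquiv_ofList_append {l₁ l₂ : List E} {u : V} (h₁ : IsWalk src tgt u l₁ u)
    (h₂ : IsWalk src tgt u l₂ u) :
    ResolutionEquiv (ofList src tgt (l₁ ++ l₂)) (ofList src tgt l₁ + ofList src tgt l₂) := by
  by_cases hl₁ : l₁ = []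
  · simpa [hl₁] using Relation.ReflTransGen.refl
  by_cases hl₂ : l₂ = []
  · simpa [hl₂] using Relation.ReflTransGen.refl
  · exact .single ⟨u, .inr (resolutionAt_ofList hl₁ hl₂ h₁ h₂)⟩

theorem resolutionEquiv_ofList_splice {w c r : List E} {u x : V} (hw : IsWalk src tgt u w x)
    (hc : IsWalk src tgt x c x) (hr : IsWalk src tgt x r u) :
    ResolutionEquiv (ofList src tgt (w ++ (c ++ r)))
      (ofList src tgt (w ++ r) + ofList src tgt c) := by
  have rotate_long : ofList src tgt (w ++ (c ++ r)) = ofList src tgt ((r ++ w) ++ c) :=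
    ofList_eq_of_isRotated (by simpa using List.isRotated_append (l := w ++ c) (l' := r))
  have rotate_short : ofList src tgt (w ++ r) = ofList src tgt (r ++ w) :=
    ofList_eq_of_isRotated List.isRotated_append
  rw [rotate_long, rotate_short]
  exact resolutionEquiv_ofList_append (hr.append hw) hc

section EdgeCount

variable [DecidableEq E]

@[simp]
theorem edgeCount_zero (e : E) : edgeCount (0 : MultiLoop src tgt) e = 0 :=
  rfl

@[simp]
theorem edgeCount_add (μ ν : MultiLoop src tgt) (e : E) :
    edgeCount (μ + ν) e = edgeCount μ e + edgeCount ν e := by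
  simp [edgeCount]

theorem edgeCount_singleton (c : Loop src tgt) (e : E) :
    edgeCount ({c} : MultiLoop src tgt) e = c.edgeCount e := by
  simp [edgeCount]

theorem _root_.Loop.edgeCount_mk {l : List E} (hl : IsLoop src tgt l) (e : E) :
    (Loop.mk src tgt l hl).edgeCount e = l.count e :=
  rfl

theorem edgeCount_ofList {l : List E} {u : V} (hl : IsWalk src tgt u l u) (e : E) :
    edgeCount (ofList src tgt l) e = l.count e := by
  by_cases h : l = []
  · simp [h]
  · rw [ofList_of_isLoop (isLoop_iff_isWalk.2 ⟨h, u, hl⟩)]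
    simp [edgeCount_singleton, Loop.edgeCount_mk]

theorem _root_.ResolutionAt.edgeCount_eq {v : V} {μ μ' : MultiLoop src tgt}
    (h : ResolutionAt v μ μ') (e : E) : edgeCount μ e = edgeCount μ' e := by
  obtain ⟨l₁, l₂, h₁, h₂, h₁₂, μ₀, -, -, rfl, rfl⟩ := h
  simp [← Multiset.singleton_add, edgeCount_singleton, Loop.edgeCount_mk, add_assoc]

theorem ResolutionEquiv.edgeCount_eq {μ μ' : MultiLoop src tgt} (h : ResolutionEquiv μ μ') (e : E) :
    edgeCount μ e = edgeCount μ' e := by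
  induction h with
  | refl => rfl
  | tail _ step ih =>
    obtain ⟨v, hv | hv⟩ := step
    · exact ih.trans (hv.edgeCount_eq e)
    · exact ih.trans (hv.edgeCount_eq e).symm

theorem eq_zero_of_edgeCount_eq_zero {μ : MultiLoop src tgt} (h : ∀ e, edgeCount μ e = 0) :
    μ = 0 := by
  refine Multiset.eq_zero_of_forall_notMem fun c hc => ?_
  obtain ⟨ν, rfl⟩ := Multiset.exists_cons_of_mem hc
  obtain ⟨l, hl, hcl⟩ := exists_singleton_eq_ofList c
  obtain ⟨hne, u, hwalk⟩ := isLoop_iff_isWalk.1 hl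
  obtain ⟨e, t, rfl⟩ := List.exists_cons_of_ne_nil hne
  simpa [← Multiset.singleton_add, hcl, edgeCount_ofList hwalk] using h e

theorem exists_eq_ofList_cons_add {μ : MultiLoop src tgt} {f : E} (hf : 0 < edgeCount μ f) :
    ∃ b ν, IsWalk src tgt (tgt f) b (src f) ∧ μ = ofList src tgt (f :: b) + ν := by
  obtain ⟨c, hc, hfc⟩ : ∃ c ∈ μ, 0 < c.edgeCount f := by
    simpa [edgeCount, Nat.pos_iff_ne_zero, Multiset.sum_eq_zero_iff] using hf
  obtain ⟨ν, rfl⟩ := Multiset.exists_cons_of_mem hc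
  obtain ⟨⟨l, hl⟩, rfl⟩ := Quotient.exists_rep c
  obtain ⟨s, t, rfl⟩ := List.append_of_mem (List.count_pos_iff.1 hfc)
  have hrot : (s ++ f :: t) ~r (f :: (t ++ s)) := List.isRotated_append
  obtain ⟨-, u, rfl, hwalk⟩ := isLoop_iff_isWalk.1 (hl.of_isRotated hrot)
  refine ⟨t ++ s, ν, hwalk, ?_⟩
  rw [← ofList_eq_of_isRotated hrot, ofList_of_isLoop hl, Multiset.singleton_add]
  rfl

theorem exists_resolutionEquiv_ofList_append_cons_add {w r : List E} {f : E} {u : V}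
    {ν : MultiLoop src tgt} (hw : IsWalk src tgt u w (src f))
    (hr : IsWalk src tgt (src f) r u) (hf : 0 < r.count f + edgeCount ν f) :
    ∃ r' ν', IsWalk src tgt (tgt f) r' u ∧
      ResolutionEquiv (ofList src tgt (w ++ r) + ν) (ofList src tgt (w ++ f :: r') + ν') := by
  by_cases hfr : f ∈ r
  · obtain ⟨a, b, rfl⟩ := List.append_of_mem hfr
    obtain ⟨_, ha, rfl, hb⟩ := isWalk_append.1 hr
    refine ⟨b, ofList src tgt a + ν, hb, ?_⟩
    rw [← add_assoc]
    exact (resolutionEquiv_ofList_splice (r := f :: b) hw ha ⟨rfl, hb⟩).add_right ν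
  · rw [List.count_eq_zero_of_not_mem hfr, zero_add] at hf
    obtain ⟨b, ν', hb, rfl⟩ := exists_eq_ofList_cons_add hf
    refine ⟨b ++ r, ν', hb.append hr, ?_⟩
    rw [← add_assoc]
    exact (resolutionEquiv_ofList_splice (c := f :: b) hw ⟨rfl, hb⟩ hr).symm.add_right ν'

theorem exists_resolutionEquiv_ofList_append_add (μ : MultiLoop src tgt) {w : List E} {u v : V}
    (hw : IsWalk src tgt u w v) (hcount : ∀ e, w.count e ≤ edgeCount μ e) :
    ∃ r ν, IsWalk src tgt v r u ∧ ResolutionEquiv μ (ofList src tgt (w ++ r) + ν) := by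
  induction w using List.reverseRecOn generalizing v with
  | nil => exact ⟨[], μ, hw.symm, by simpa using Relation.ReflTransGen.refl⟩
  | append_singleton w f ih =>
    obtain ⟨hinit, rfl⟩ := isWalk_concat.1 hw
    obtain ⟨r, ν, hr, hμ⟩ := ih hinit fun e =>
      (List.sublist_append_left w [f]).count_le e |>.trans (hcount e)
    have hf : 0 < r.count f + edgeCount ν f := by
      have := hcount f
      rw [hμ.edgeCount_eq, edgeCount_add, edgeCount_ofList (hinit.append hr)] at this
      simp only [List.count_append, List.count_singleton_self] at this
      lia
    obtain ⟨r', ν', hr', hstep⟩ := exists_resolutionEquiv_ofList_append_cons_add hinit hr hf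
    exact ⟨r', ν', hr', by simpa using hμ.trans hstep⟩

theorem exists_resolutionEquiv_ofList_add (μ : MultiLoop src tgt) {w : List E} {u : V}
    (hw : IsWalk src tgt u w u) (hcount : ∀ e, w.count e ≤ edgeCount μ e) :
    ∃ ν, ResolutionEquiv μ (ofList src tgt w + ν) := by
  obtain ⟨r, ν, hr, hμ⟩ := exists_resolutionEquiv_ofList_append_add μ hw hcount
  refine ⟨ofList src tgt r + ν, hμ.trans ?_⟩
  rw [← add_assoc]
  exact (resolutionEquiv_ofList_append hw hr).add_right ν

end EdgeCount

end MultiLoop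

open MultiLoop in
theorem multiloop_resolution_chain_general {V E : Type*} [DecidableEq E] {src tgt : E → V}
    {μ μ' : MultiLoop src tgt} (h : ∀ e : E, MultiLoop.edgeCount μ e = MultiLoop.edgeCount μ' e) :
    ResolutionEquiv μ μ' := by
  induction μ' using Multiset.induction generalizing μ with
  | empty => rw [eq_zero_of_edgeCount_eq_zero h]
  | cons c μ' ih =>
    obtain ⟨w, hw, hc⟩ := exists_singleton_eq_ofList c
    obtain ⟨-, u, hwalk⟩ := isLoop_iff_isWalk.1 hw
    rw [← Multiset.singleton_add, hc] at h ⊢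
    simp only [edgeCount_add, edgeCount_ofList hwalk] at h
    obtain ⟨ν, hμ⟩ := exists_resolutionEquiv_ofList_add μ hwalk fun e => by
      rw [h]
      exact Nat.le_add_right _ _
    have hν (e : E) : edgeCount ν e = edgeCount μ' e := by
      have := hμ.edgeCount_eq e
      rw [h, edgeCount_add, edgeCount_ofList hwalk] at this
      exact (Nat.add_left_cancel this).symm
    exact hμ.trans ((ih hν).add_left _)

/-- If two multi-loops of a finite directed multigraph have the same
edge multiplicity function, then they are connected by a finite sequence of multi-loops
in which consecutive terms are related by a resolution at some vertex. -/
theorem multiloop_resolution_chain {V E : Type*} [Fintype V] [Fintype E] [DecidableEq E]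
    (src tgt : E → V) (μ μ' : MultiLoop src tgt)
    (h : ∀ e : E, MultiLoop.edgeCount μ e = MultiLoop.edgeCount μ' e) :
    Relation.ReflTransGen
      (fun a b : MultiLoop src tgt => ∃ v : V, ResolutionAt v a b ∨ ResolutionAt v b a)
      μ μ' :=
  multiloop_resolution_chain_general h
end

section
/- Let G be a finite directed multigraph and let μ be an embedded multi-loop in G. Then μ is the unique multi-loop with its edge multiplicity function: any multi-loop μ' in G whose edge multiplicity function equals that of μ satisfies μ' = μ (as multisets of loops, with loops considered up to cyclic rotation). -/
/-!
In an embedded multi-loop `μ` an edge is determined by its initial vertex, so each edge has at most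
one possible successor among the edges of `μ`. Hence a loop that uses only edges of `μ`, each at
most once, is forced to follow the loop of `μ` with which it shares an edge, and so coincides with
it. Removing the loops of `μ'` from `μ` one at a time gives `μ' ≤ μ`, and what is left of `μ` has
no edges.
-/

section Cycle

variable {α : Type*} {r : α → α → Prop}

theorem eq_of_isChain_cons_append_singleton (hr : Relator.RightUnique r) {a z : α} {l l' : List α}
    (hl : List.IsChain r (a :: (l ++ [z]))) (hl' : List.IsChain r (a :: (l' ++ [z])))
    (hz : z ∉ l) (hz' : z ∉ l') : l = l' := by
  induction l generalizing a l' with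
  | nil =>
    cases l' with
    | nil => rfl
    | cons b l' =>
      have hzb : z = b := hr (List.isChain_cons_cons.1 hl).1 (List.isChain_cons_cons.1 hl').1
      exact absurd (hzb ▸ List.mem_cons_self) hz'
  | cons b l ih =>
    obtain ⟨hab, hl⟩ := List.isChain_cons_cons.1 hl
    cases l' with
    | nil =>
      have hzb : z = b := hr (List.isChain_cons_cons.1 hl').1 hab
      exact absurd (hzb ▸ List.mem_cons_self) hz
    | cons b' l' =>
      obtain ⟨hab', hl'⟩ := List.isChain_cons_cons.1 hl'
      obtain rfl : b = b' := hr hab hab'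
      rw [ih hl hl' (List.not_mem_of_not_mem_cons hz) (List.not_mem_of_not_mem_cons hz')]

theorem exists_coe_cons_eq_of_mem_cycle {a : α} {c : Cycle α} (ha : a ∈ c) :
    ∃ l : List α, ((a :: l : List α) : Cycle α) = c := by
  induction c using Quotient.inductionOn with
  | h l =>
    obtain ⟨s, t, rfl⟩ := List.append_of_mem (Cycle.mem_coe_iff.1 ha)
    exact ⟨t ++ s, Cycle.coe_eq_coe.2 (List.isRotated_append (l := a :: t))⟩

theorem cycle_eq_of_chain_of_mem (hr : Relator.RightUnique r) {c c' : Cycle α}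
    (hc : c.Chain r) (hc' : c'.Chain r) (hnd : c.Nodup) (hnd' : c'.Nodup)
    {a : α} (ha : a ∈ c) (ha' : a ∈ c') : c = c' := by
  obtain ⟨l, rfl⟩ := exists_coe_cons_eq_of_mem_cycle ha
  obtain ⟨l', rfl⟩ := exists_coe_cons_eq_of_mem_cycle ha'
  rw [Cycle.chain_coe_cons] at hc hc'
  rw [Cycle.nodup_coe_iff, List.nodup_cons] at hnd hnd'
  rw [eq_of_isChain_cons_append_singleton hr hc hc' hnd.1 hnd'.1]

end Cycle

section Loops

variable {V E : Type*} {src tgt : E → V}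

theorem IsLoop.chain {l : List E} (hl : IsLoop src tgt l) :
    (l : Cycle E).Chain (fun e f => f ∈ l ∧ tgt e = src f) := by
  obtain ⟨hne, hstep⟩ := hl
  have hpos : 0 < l.length := List.length_pos_iff.2 hne
  have hclose : tgt (l.getLast hne) = src l[0] := by
    simpa [List.getLast_eq_getElem, Nat.sub_add_cancel hpos] using
      hstep ⟨l.length - 1, Nat.sub_one_lt_of_lt hpos⟩
  have hadj (i : ℕ) (hi : i + 1 < l.length) : tgt l[i] = src l[i + 1] := by
    simpa [Nat.mod_eq_of_lt hi] using hstep ⟨i, Nat.lt_of_succ_lt hi⟩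
  rw [Cycle.chain_ne_nil _ hne, List.isChain_iff_getElem]
  rintro (_ | i) hi
  · exact ⟨List.getElem_mem _, hclose⟩
  · exact ⟨List.getElem_mem _, hadj i (Nat.lt_of_succ_lt_succ hi)⟩

namespace Loop

/-- The cyclic sequence of edges of a loop, forgetting that consecutive edges are adjacent. -/
def toCycle (c : Loop src tgt) : Cycle E :=
  Quotient.lift (s := loopSetoid src tgt) (fun l => (l.1 : Cycle E))
    (fun _ _ h => Cycle.coe_eq_coe.2 h) c

/-- The edges traversed by a loop, with multiplicity. -/
def edges (c : Loop src tgt) : Multiset E :=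
  c.toCycle.toMultiset

theorem toCycle_injective : Function.Injective (toCycle : Loop src tgt → Cycle E) := by
  rintro ⟨l⟩ ⟨l'⟩ h
  exact Quotient.sound (Cycle.coe_eq_coe.1 h)

theorem mem_toCycle {c : Loop src tgt} {e : E} : e ∈ c.toCycle ↔ e ∈ c.edges := by
  obtain ⟨l⟩ := c
  rfl

theorem nodup_toCycle {c : Loop src tgt} : c.toCycle.Nodup ↔ c.edges.Nodup := by
  obtain ⟨l⟩ := c
  rfl

theorem chain_toCycle (c : Loop src tgt) :
    c.toCycle.Chain (fun e f => f ∈ c.edges ∧ tgt e = src f) := by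
  obtain ⟨l, hl⟩ := c
  exact hl.chain

theorem exists_mem_edges (c : Loop src tgt) : ∃ e, e ∈ c.edges := by
  obtain ⟨l, hl⟩ := c
  exact List.exists_mem_of_ne_nil l hl.1

theorem edgeCount_eq_count_edges [DecidableEq E] (c : Loop src tgt) (e : E) :
    c.edgeCount e = c.edges.count e := by
  obtain ⟨l⟩ := c
  exact (Multiset.coe_count e l.1).symm

theorem vertexCount_eq_count_map_edges [DecidableEq V] (c : Loop src tgt) (v : V) :
    c.vertexCount v = (c.edges.map src).count v := by
  obtain ⟨l⟩ := c
  exact (Multiset.coe_count v (l.1.map src)).symm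

theorem eq_of_mem_edges {s : Multiset E} (hs : s.Nodup) (hinj : Set.InjOn src {e | e ∈ s})
    {c d : Loop src tgt} (hc : c.edges ≤ s) (hd : d.edges ≤ s)
    {e : E} (hec : e ∈ c.edges) (hed : e ∈ d.edges) : c = d := by
  have hright : Relator.RightUnique (fun e f => f ∈ s ∧ tgt e = src f) :=
    fun _ _ _ h h' => hinj h.1 h'.1 (h.2.symm.trans h'.2)
  have hchain {b : Loop src tgt} (hb : b.edges ≤ s) :
      b.toCycle.Chain (fun e f => f ∈ s ∧ tgt e = src f) :=
    b.chain_toCycle.imp fun _ _ h => ⟨Multiset.mem_of_le hb h.1, h.2⟩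
  exact toCycle_injective <| cycle_eq_of_chain_of_mem hright (hchain hc) (hchain hd)
    (nodup_toCycle.2 (Multiset.nodup_of_le hc hs)) (nodup_toCycle.2 (Multiset.nodup_of_le hd hs))
    (mem_toCycle.2 hec) (mem_toCycle.2 hed)

end Loop

namespace MultiLoop

/-- The edges traversed by the loops of a multi-loop, with multiplicity: the edge multiplicity
function as a multiset. -/
def edges (μ : MultiLoop src tgt) : Multiset E :=
  μ.bind Loop.edges

theorem edgeCount_eq_count_edges [DecidableEq E] (μ : MultiLoop src tgt) (e : E) :
    μ.edgeCount e = μ.edges.count e := by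
  simp only [edgeCount, edges, Multiset.count_bind, Loop.edgeCount_eq_count_edges]

theorem vertexCount_eq_count_map_edges [DecidableEq V] (μ : MultiLoop src tgt) (v : V) :
    μ.vertexCount v = (μ.edges.map src).count v := by
  simp only [vertexCount, edges, Multiset.map_bind, Multiset.count_bind,
    Loop.vertexCount_eq_count_map_edges]

theorem embedded_iff_nodup_map_edges [DecidableEq V] {μ : MultiLoop src tgt} :
    μ.Embedded ↔ (μ.edges.map src).Nodup := by
  simp only [Embedded, vertexCount_eq_count_map_edges, Multiset.nodup_iff_count_le_one]

theorem edges_cons (c : Loop src tgt) (μ : MultiLoop src tgt) :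
    edges (c ::ₘ μ) = c.edges + μ.edges :=
  Multiset.cons_bind ..

theorem edges_add (μ ν : MultiLoop src tgt) : edges (μ + ν) = μ.edges + ν.edges :=
  Multiset.add_bind ..

theorem eq_zero_of_edges_eq_zero {μ : MultiLoop src tgt} (h : μ.edges = 0) : μ = 0 := by
  refine Multiset.eq_zero_of_forall_notMem fun c hc => ?_
  obtain ⟨e, he⟩ := c.exists_mem_edges
  exact Multiset.eq_zero_iff_forall_notMem.1 h e (Multiset.mem_bind.2 ⟨c, hc, he⟩)

theorem mem_of_edges_le {μ : MultiLoop src tgt} (hμ : (μ.edges.map src).Nodup)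
    {c : Loop src tgt} (hc : c.edges ≤ μ.edges) : c ∈ μ := by
  obtain ⟨e, hec⟩ := c.exists_mem_edges
  obtain ⟨d, hd, hed⟩ := Multiset.mem_bind.1 (Multiset.mem_of_le hc hec)
  have hinj : Set.InjOn src {e | e ∈ μ.edges} :=
    fun e he f hf => Multiset.inj_on_of_nodup_map hμ e he f hf
  obtain rfl : c = d :=
    Loop.eq_of_mem_edges hμ.of_map hinj hc (Multiset.le_bind μ hd) hec hed
  exact hd

theorem le_of_edges_le {μ μ' : MultiLoop src tgt} (hμ : (μ.edges.map src).Nodup)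
    (h : μ'.edges ≤ μ.edges) : μ' ≤ μ := by
  induction μ' using Multiset.induction_on generalizing μ with
  | empty => exact Multiset.zero_le μ
  | cons c μ' ih =>
    rw [edges_cons] at h
    obtain ⟨ν, rfl⟩ := Multiset.exists_cons_of_mem (mem_of_edges_le hμ (le_of_add_le_left h))
    rw [edges_cons, Multiset.map_add] at hμ
    rw [edges_cons] at h
    exact (Multiset.cons_le_cons_iff c).2
      (ih (Multiset.nodup_of_le (Multiset.le_add_left _ _) hμ) (le_of_add_le_add_left h))

theorem eq_of_edges_eq {μ μ' : MultiLoop src tgt} (hμ : (μ.edges.map src).Nodup)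
    (h : μ'.edges = μ.edges) : μ' = μ := by
  obtain ⟨ν, rfl⟩ := Multiset.le_iff_exists_add.1 (le_of_edges_le hμ h.le)
  have hν : edges ν = 0 := by
    rwa [edges_add, left_eq_add] at h
  rw [eq_zero_of_edges_eq_zero hν, add_zero]

end MultiLoop

end Loops

theorem embedded_multiloop_unique_general {V E : Type*} [DecidableEq V] [DecidableEq E]
    (src tgt : E → V) (μ : MultiLoop src tgt) (hemb : MultiLoop.Embedded μ)
    (μ' : MultiLoop src tgt)
    (h : ∀ e : E, MultiLoop.edgeCount μ' e = MultiLoop.edgeCount μ e) : μ' = μ := by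
  have hedges : μ'.edges = μ.edges := Multiset.ext.2 fun e => by
    rw [← μ'.edgeCount_eq_count_edges, ← μ.edgeCount_eq_count_edges, h e]
  exact MultiLoop.eq_of_edges_eq (MultiLoop.embedded_iff_nodup_map_edges.1 hemb) hedges

/-- An embedded multi-loop of a finite directed multigraph is the unique
multi-loop with its edge multiplicity function. -/
theorem embedded_multiloop_unique {V E : Type*} [Fintype V] [Fintype E]
    [DecidableEq V] [DecidableEq E]
    (src tgt : E → V) (μ : MultiLoop src tgt)
    (hemb : MultiLoop.Embedded μ)
    (μ' : MultiLoop src tgt)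
    (h : ∀ e : E, MultiLoop.edgeCount μ' e = MultiLoop.edgeCount μ e) :
    μ' = μ := by
  exact embedded_multiloop_unique_general src tgt μ hemb μ' h
end

section
/- Let G be a finite directed multigraph and let α be a function from the edges of G to the natural numbers satisfying the Kirchhoff condition (at every vertex the α-weighted in-degree equals the α-weighted out-degree). For each edge e consider α(e) labelled copies e_1, …, e_{α(e)} of e, and for each vertex v let a 'matching at v' be a bijection from the set of copies of edges terminating at v to the set of copies of edges originating at v. Then: (a) every family σ = (σ_v)_v of matchings, one at each vertex, determines a multi-loop μ_σ with edge multiplicity function α, obtained by following each edge-copy to its successor under the matchings; (b) every multi-loop with edge multiplicity function α equals μ_σ for some family σ of matchings; and (c) if two families σ and σ' agree except that σ'_v is the composition of σ_v with a single transposition at one vertex v, then μ_σ and μ_{σ'} are related by a resolution at v. -/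
/-- The labelled copies of edges: `α e` copies of each edge `e`. -/
abbrev Copies {E : Type*} (α : E → ℕ) : Type _ := Σ e : E, Fin (α e)

/-- The edge underlying a copy. -/
def Copies.edge {E : Type*} {α : E → ℕ} (c : Copies α) : E := c.1

/-- Copies of edges terminating at the vertex `v`. -/
abbrev InCopies {V E : Type*} (tgt : E → V) (α : E → ℕ) (v : V) : Type _ :=
  {c : Copies α // tgt c.1 = v}

/-- Copies of edges originating at the vertex `v`. -/
abbrev OutCopies {V E : Type*} (src : E → V) (α : E → ℕ) (v : V) : Type _ :=
  {c : Copies α // src c.1 = v}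

/-- A family of matchings: for each vertex `v`, a bijection from the copies of edges
terminating at `v` to the copies of edges originating at `v`. -/
abbrev MatchingFamily {V E : Type*} (src tgt : E → V) (α : E → ℕ) : Type _ :=
  ∀ v : V, InCopies tgt α v ≃ OutCopies src α v

/-- The successor of an edge-copy under the family of matchings `σ`. -/
def succCopy {V E : Type*} {src tgt : E → V} {α : E → ℕ}
    (σ : MatchingFamily src tgt α) (c : Copies α) : Copies α :=
  ((σ (tgt c.1)) ⟨c, rfl⟩).1

/-- A based cycle of edge-copies following the matchings `σ`: each entry is followed
(cyclically) by its successor under `σ`. -/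
def IsSigmaCycle {V E : Type*} {src tgt : E → V} {α : E → ℕ}
    (σ : MatchingFamily src tgt α) (L : List (Copies α)) : Prop :=
  L ≠ [] ∧ ∀ i : Fin L.length,
    L.get ⟨(i.1 + 1) % L.length, Nat.mod_lt _ (lt_of_le_of_lt (Nat.zero_le _) i.isLt)⟩ =
      succCopy σ (L.get i)

/-- The multi-loop `μ` is obtained by following each edge-copy to its successor under the
matchings `σ`: there is a multiset of cycles of edge-copies, each following `σ`, using
each edge-copy exactly once, whose underlying edge lists give exactly the loops of `μ`. -/
def Traces {V E : Type*} [DecidableEq E] {src tgt : E → V} {α : E → ℕ}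
    (σ : MatchingFamily src tgt α) (μ : MultiLoop src tgt) : Prop :=
  ∃ Ls : Multiset {L : List (Copies α) //
      IsSigmaCycle σ L ∧ IsLoop src tgt (L.map Sigma.fst)},
    (∀ c : Copies α, (Ls.map (fun L => L.1.count c)).sum = 1) ∧
    μ = Ls.map (fun L => Loop.mk src tgt (L.1.map Sigma.fst) L.2.2)

/-!
The matchings `σ` glue to a permutation `succCopy σ` of the edge-copies, and the multi-loop traced
by `σ` is the image of its cycle decomposition under the projection from copies to edges. A cycle
without repetitions that follows a map `f` is the periodic orbit of `f` through any of its points,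
so the decomposition exists and is unique. Conversely, if a multi-loop traverses each edge `e`
exactly `α e` times, its edge occurrences can be labelled bijectively by the copies; passing from
each copy to the next one on its loop is a permutation respecting endpoints, hence a matching
family. Finally, replacing `f` by `f ∘ swap a b` cuts the cycle `A a B b` into the cycles `A a` and
`B b`, or joins the latter into the former, and changes no other cycle.
-/

section ClosedChain

variable {X Y : Type*} {r : X → X → Prop} {f : X → X}

theorem cycle_mem_toMultiset {s : Cycle X} {x : X} : x ∈ s.toMultiset ↔ x ∈ s := by
  induction s using Cycle.induction_on <;> rfl

theorem cycle_nodup_toMultiset {s : Cycle X} : s.toMultiset.Nodup ↔ s.Nodup := by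
  induction s using Cycle.induction_on <;> rfl

theorem cycle_toMultiset_map (g : X → Y) (s : Cycle X) :
    (s.map g).toMultiset = s.toMultiset.map g := by
  induction s using Cycle.induction_on <;> rfl

theorem cycle_exists_eq_coe_cons_of_mem {s : Cycle X} {x : X} (hx : x ∈ s) :
    ∃ l : List X, s = ↑(x :: l) := by
  obtain ⟨L⟩ := s
  obtain ⟨l₁, l₂, rfl⟩ := List.append_of_mem (Cycle.mem_coe_iff.1 hx)
  exact ⟨l₂ ++ l₁, Cycle.coe_eq_coe.2 List.isRotated_append⟩

theorem cycle_exists_mem_of_ne_nil {s : Cycle X} (hs : s ≠ Cycle.nil) : ∃ x, x ∈ s := by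
  induction s using Cycle.induction_on with
  | nil => exact absurd rfl hs
  | cons x l => exact ⟨x, Cycle.mem_coe_iff.2 List.mem_cons_self⟩

theorem chain_coe_iff_forall_get {l : List X} :
    (l : Cycle X).Chain r ↔ ∀ i : Fin l.length, r (l.get i)
      (l.get ⟨(i.1 + 1) % l.length, Nat.mod_lt _ (lt_of_le_of_lt (Nat.zero_le _) i.isLt)⟩) := by
  cases l with
  | nil => exact iff_of_true (Cycle.Chain.nil r) fun i => i.elim0
  | cons x l =>
    have getElem_closed (i : ℕ) (hi : i < l.length + 1) :
        (x :: (l ++ [x]))[i + 1]'(by simpa using hi) =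
          (x :: l)[(i + 1) % (l.length + 1)]'(Nat.mod_lt _ l.length.succ_pos) := by
      rcases Nat.lt_succ_iff_lt_or_eq.1 hi with hi | rfl
      · simp [Nat.mod_eq_of_lt (Nat.succ_lt_succ hi), hi]
      · simp
    have getElem_open (i : ℕ) (hi : i < l.length + 1) :
        (x :: (l ++ [x]))[i]'(by simp; lia) = (x :: l)[i] :=
      List.getElem_append_left (as := x :: l) hi
    rw [Cycle.chain_coe_cons, List.isChain_iff_getElem]
    simp only [List.length_cons, List.length_append, List.length_nil, zero_add,
      add_lt_add_iff_right, Fin.forall_iff, List.get_eq_getElem]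
    refine forall₂_congr fun i hi => ?_
    rw [getElem_closed i hi, getElem_open i hi]

/-- `s` is a nonempty cyclic sequence whose cyclically consecutive entries are related by `r`.
With `r e e' := tgt e = src e'` these are the closed directed walks up to rotation, and with
`r x y := f x = y` the cyclic sequences traversed by iterating `f`. -/
def IsClosedChain (r : X → X → Prop) (s : Cycle X) : Prop :=
  s ≠ Cycle.nil ∧ s.Chain r

theorem isClosedChain_coe_iff_forall_get {l : List X} :
    IsClosedChain r (l : Cycle X) ↔ l ≠ [] ∧ ∀ i : Fin l.length, r (l.get i)
      (l.get ⟨(i.1 + 1) % l.length, Nat.mod_lt _ (lt_of_le_of_lt (Nat.zero_le _) i.isLt)⟩) :=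
  and_congr (Cycle.coe_eq_nil l).not chain_coe_iff_forall_get

theorem isClosedChain_map {r : Y → Y → Prop} (g : X → Y) {s : Cycle X} :
    IsClosedChain r (s.map g) ↔ IsClosedChain (fun x y => r (g x) (g y)) s :=
  and_congr (Cycle.map_eq_nil g s).not (Cycle.chain_map g)

theorem IsClosedChain.of_forall_apply {s : Cycle X} (hs : IsClosedChain (f · = ·) s)
    (hr : ∀ x, r x (f x)) : IsClosedChain r s :=
  ⟨hs.1, hs.2.imp fun x y (h : f x = y) => h ▸ hr x⟩

theorem IsClosedChain.rel_apply {s : Cycle X} (hf : IsClosedChain (f · = ·) s)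
    (hr : IsClosedChain r s) {x : X} (hx : x ∈ s) : r x (f x) := by
  obtain ⟨l, rfl⟩ := cycle_exists_eq_coe_cons_of_mem hx
  have hf := hf.2
  have hr := hr.2
  cases l <;> simp_all [Cycle.chain_coe_cons]

theorem isChain_cons_concat_iff_map_eq {x z : X} {l : List X} :
    List.IsChain (f · = ·) (x :: (l ++ [z])) ↔ f x :: l.map f = l ++ [z] := by
  induction l generalizing x with
  | nil => simp
  | cons y l ih =>
    rw [List.cons_append, List.isChain_cons_cons, ih, List.map_cons, List.cons.injEq]

theorem isClosedChain_concat_iff {x : X} {l : List X} :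
    IsClosedChain (f · = ·) (↑(l ++ [x]) : Cycle X) ↔ f x :: l.map f = l ++ [x] := by
  rw [← Cycle.coe_cons_eq_coe_append, IsClosedChain, Cycle.chain_coe_cons,
    isChain_cons_concat_iff_map_eq]
  simp

theorem isClosedChain_congr {g : X → X} {s : Cycle X} (h : ∀ x ∈ s, f x = g x) :
    IsClosedChain (f · = ·) s ↔ IsClosedChain (g · = ·) s := by
  induction s using Cycle.induction_on with
  | nil => exact iff_of_false (fun hs => hs.1 rfl) (fun hs => hs.1 rfl)
  | cons x l =>
    obtain ⟨hx, hl⟩ := List.forall_mem_cons.1 h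
    rw [Cycle.coe_cons_eq_coe_append, isClosedChain_concat_iff, isClosedChain_concat_iff, hx,
      List.map_congr_left hl]

theorem isClosedChain_concat_append_concat_iff {x y : X} {l m : List X} :
    IsClosedChain (f · = ·) (↑((l ++ [x]) ++ (m ++ [y])) : Cycle X) ↔
      f y :: l.map f = l ++ [x] ∧ f x :: m.map f = m ++ [y] := by
  rw [← List.append_assoc, ← Cycle.coe_cons_eq_coe_append, IsClosedChain, Cycle.chain_coe_cons]
  have regroup : y :: (l ++ [x] ++ m ++ [y]) = (y :: l) ++ x :: (m ++ [y]) := by simp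
  rw [regroup, List.isChain_split, List.cons_append, isChain_cons_concat_iff_map_eq,
    isChain_cons_concat_iff_map_eq]
  simp

theorem IsClosedChain.rel_getLast_head {l m : List X} {x y : X}
    (h : IsClosedChain r (↑((l ++ [x]) ++ (y :: m)) : Cycle X)) : r x y := by
  have rotated : (↑((l ++ [x]) ++ (y :: m)) : Cycle X) = ↑(x :: y :: (m ++ l)) :=
    Cycle.coe_eq_coe.2 (by simpa using List.isRotated_append (l := l) (l' := x :: y :: m))
  have := h.2
  rw [rotated, Cycle.chain_coe_cons] at this
  exact (List.isChain_cons_cons.1 this).1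

end ClosedChain

section OrbitCycles

variable {X : Type*} {f : X → X}

theorem getElem_eq_iterate_of_isChain {x : X} {l : List X}
    (h : List.IsChain (f · = ·) (x :: l)) (i : ℕ) (hi : i < (x :: l).length) :
    (x :: l)[i] = f^[i] x := by
  induction i with
  | zero => rfl
  | succ i ih =>
    rw [Function.iterate_succ_apply', ← ih (by lia), List.isChain_iff_getElem.1 h i hi]

theorem minimalPeriod_eq_length_of_isChain {x : X} {l : List X} (hl : (x :: l).Nodup)
    (h : List.IsChain (f · = ·) (x :: (l ++ [x]))) :
    Function.minimalPeriod f x = l.length + 1 := by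
  have getElem_eq (i : ℕ) (hi : i < (x :: l).length) : (x :: l)[i] = f^[i] x := by
    rw [← getElem_eq_iterate_of_isChain h i (by simp at hi ⊢; lia)]
    exact (List.getElem_append_left (as := x :: l) hi).symm
  have periodic : Function.IsPeriodicPt f (l.length + 1) x := by
    refine (getElem_eq_iterate_of_isChain h (l.length + 1) (by simp)).symm.trans ?_
    simp
  refine (periodic.minimalPeriod_le l.length.succ_pos).eq_of_not_lt fun hlt => ?_
  have returns : (x :: l)[Function.minimalPeriod f x] = (x :: l)[0] := by
    rw [getElem_eq _ hlt, Function.iterate_minimalPeriod, List.getElem_cons_zero]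
  exact (periodic.minimalPeriod_pos l.length.succ_pos).ne' (hl.getElem_inj_iff.1 returns)

theorem IsClosedChain.eq_periodicOrbit {s : Cycle X} (h : IsClosedChain (f · = ·) s)
    (hs : s.Nodup) {x : X} (hx : x ∈ s) : s = Function.periodicOrbit f x := by
  obtain ⟨l, rfl⟩ := cycle_exists_eq_coe_cons_of_mem hx
  have chain := (Cycle.chain_coe_cons _ _ _).1 h.2
  rw [Function.periodicOrbit, minimalPeriod_eq_length_of_isChain hs chain]
  congr 1
  refine List.ext_getElem (by simp) fun i hi _ => ?_
  rw [List.getElem_map, List.getElem_range,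
    ← getElem_eq_iterate_of_isChain chain i (by simp at hi ⊢; lia)]
  exact (List.getElem_append_left (as := x :: l) hi).symm

theorem isClosedChain_periodicOrbit {x : X} (hx : x ∈ Function.periodicPts f) :
    IsClosedChain (f · = ·) (Function.periodicOrbit f x) :=
  ⟨fun h => Function.periodicOrbit_eq_nil_iff_not_periodic_pt.1 h hx,
    (Function.periodicOrbit_chain' _ hx).2 fun n => (Function.iterate_succ_apply' f n x).symm⟩

theorem periodicOrbit_eq_of_mem {x y : X} (hx : x ∈ Function.periodicPts f)
    (hy : y ∈ Function.periodicOrbit f x) :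
    Function.periodicOrbit f y = Function.periodicOrbit f x := by
  obtain ⟨n, rfl⟩ := (Function.mem_periodicOrbit_iff hx).1 hy
  exact Function.periodicOrbit_apply_iterate_eq hx n

variable [Fintype X]

/-- `S` is a decomposition of the finite type `X` into cycles of `f`: every member of `S` follows
`f`, and every point of `X` occurs exactly once among all members, counted with multiplicity. -/
structure IsCycleDecomposition (f : X → X) (S : Multiset (Cycle X)) : Prop where
  isClosedChain : ∀ s ∈ S, IsClosedChain (f · = ·) s
  bind_toMultiset : S.bind Cycle.toMultiset = Finset.univ.val

theorem isCycleDecomposition_iff {S : Multiset (Cycle X)} :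
    IsCycleDecomposition f S ↔
      (∀ s ∈ S, IsClosedChain (f · = ·) s) ∧ S.bind Cycle.toMultiset = Finset.univ.val :=
  ⟨fun h => ⟨h.1, h.2⟩, fun h => ⟨h.1, h.2⟩⟩

open scoped Classical in
/-- The periodic orbits of `f` as cyclic sequences, each listed once. For a permutation `f` these
are its cycles, fixed points included. -/
noncomputable def orbitCycles (f : X → X) : Multiset (Cycle X) :=
  (Finset.univ.image (Function.periodicOrbit f)).val

theorem mem_orbitCycles {s : Cycle X} :
    s ∈ orbitCycles f ↔ ∃ x, Function.periodicOrbit f x = s := by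
  simp [orbitCycles]

theorem isCycleDecomposition_orbitCycles (hf : Function.Injective f) :
    IsCycleDecomposition f (orbitCycles f) where
  isClosedChain s hs := by
    obtain ⟨x, rfl⟩ := mem_orbitCycles.1 hs
    exact isClosedChain_periodicOrbit (hf.mem_periodicPts x)
  bind_toMultiset := by
    refine (Multiset.Nodup.ext (Multiset.nodup_bind.2 ⟨fun s hs => ?_, ?_⟩)
      Finset.univ.nodup).2 fun x => iff_of_true (Multiset.mem_bind.2 ?_) (Finset.mem_univ_val x)
    · obtain ⟨x, rfl⟩ := mem_orbitCycles.1 hs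
      exact cycle_nodup_toMultiset.2 Function.nodup_periodicOrbit
    · refine Multiset.Nodup.pairwise (fun s hs t ht hst => ?_) (Finset.nodup _)
      obtain ⟨x, rfl⟩ := mem_orbitCycles.1 hs
      obtain ⟨y, rfl⟩ := mem_orbitCycles.1 ht
      refine Multiset.disjoint_left.2 fun hzx hzy => hst ?_
      rw [← periodicOrbit_eq_of_mem (hf.mem_periodicPts x) (cycle_mem_toMultiset.1 hzx),
        periodicOrbit_eq_of_mem (hf.mem_periodicPts y) (cycle_mem_toMultiset.1 hzy)]
    · exact ⟨_, mem_orbitCycles.2 ⟨x, rfl⟩,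
        cycle_mem_toMultiset.2 (Function.self_mem_periodicOrbit (hf.mem_periodicPts x))⟩

namespace IsCycleDecomposition

variable {S : Multiset (Cycle X)}

theorem exists_mem (h : IsCycleDecomposition f S) (x : X) : ∃ s ∈ S, x ∈ s := by
  have hx : x ∈ S.bind Cycle.toMultiset := h.bind_toMultiset ▸ Finset.mem_univ_val x
  simpa only [Multiset.mem_bind, cycle_mem_toMultiset] using hx

theorem nodup_of_mem (h : IsCycleDecomposition f S) {s : Cycle X} (hs : s ∈ S) : s.Nodup :=
  have := Multiset.nodup_bind.1 (h.bind_toMultiset ▸ Finset.univ.nodup)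
  cycle_nodup_toMultiset.1 (this.1 s hs)

theorem nodup (h : IsCycleDecomposition f S) : S.Nodup := by
  refine Multiset.nodup_iff_ne_cons_cons.2 fun s T hS => ?_
  have hs : IsClosedChain (f · = ·) s := h.isClosedChain s (by simp [hS])
  have disjoint_self : Disjoint s.toMultiset s.toMultiset := by
    have := h.bind_toMultiset ▸ Finset.univ.nodup
    rw [hS, Multiset.cons_bind, Multiset.cons_bind, ← add_assoc] at this
    exact Multiset.disjoint_of_nodup_add (Multiset.nodup_of_le (Multiset.le_add_right _ _) this)
  obtain ⟨x, hx⟩ := cycle_exists_mem_of_ne_nil hs.1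
  rw [← cycle_mem_toMultiset] at hx
  exact Multiset.disjoint_left.1 disjoint_self hx hx

theorem eq_orbitCycles (h : IsCycleDecomposition f S) : S = orbitCycles f := by
  refine (Multiset.Nodup.ext h.nodup (Finset.nodup _)).2 fun s => ?_
  rw [← orbitCycles, mem_orbitCycles]
  constructor
  · intro hs
    obtain ⟨x, hx⟩ := cycle_exists_mem_of_ne_nil (h.isClosedChain s hs).1
    exact ⟨x, ((h.isClosedChain s hs).eq_periodicOrbit (h.nodup_of_mem hs) hx).symm⟩
  · rintro ⟨x, rfl⟩
    obtain ⟨s, hs, hx⟩ := h.exists_mem x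
    exact (h.isClosedChain s hs).eq_periodicOrbit (h.nodup_of_mem hs) hx ▸ hs

end IsCycleDecomposition

end OrbitCycles

section Swap

variable {X : Type*} {a b : X}

theorem exists_eq_cons_of_mem_bind_toMultiset {S : Multiset (Cycle X)} (hab : a ≠ b)
    (ha : a ∈ S.bind Cycle.toMultiset) (hb : b ∈ S.bind Cycle.toMultiset) :
    ∃ (A B : List X) (R : Multiset (Cycle X)),
      S = ↑((A ++ [a]) ++ (B ++ [b])) ::ₘ R ∨ S = ↑(A ++ [a]) ::ₘ ↑(B ++ [b]) ::ₘ R := by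
  simp only [Multiset.mem_bind, cycle_mem_toMultiset] at ha hb
  obtain ⟨s, hs, has⟩ := ha
  obtain ⟨l, rfl⟩ := cycle_exists_eq_coe_cons_of_mem has
  obtain ⟨T, rfl⟩ := Multiset.exists_cons_of_mem hs
  by_cases hbl : b ∈ l
  · obtain ⟨B, A, rfl⟩ := List.append_of_mem hbl
    have rotated : (a :: (B ++ b :: A)) ~r ((A ++ [a]) ++ (B ++ [b])) := by
      simpa using List.isRotated_append (l := a :: (B ++ [b])) (l' := A)
    exact ⟨A, B, T, .inl (by rw [Cycle.coe_eq_coe.2 rotated])⟩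
  · obtain ⟨t, ht, hbt⟩ : ∃ t ∈ T, b ∈ t := by
      simpa [hab.symm, hbl] using hb
    obtain ⟨m, rfl⟩ := cycle_exists_eq_coe_cons_of_mem hbt
    obtain ⟨R, rfl⟩ := Multiset.exists_cons_of_mem ht
    exact ⟨l, m, R, .inr (by simp only [Cycle.coe_cons_eq_coe_append])⟩

theorem notMem_of_nodup_bind_toMultiset {A B : List X} {R : Multiset (Cycle X)}
    (h : ((↑(A ++ [a]) ::ₘ ↑(B ++ [b]) ::ₘ R).bind Cycle.toMultiset).Nodup) :
    (a ∉ A ∧ a ∉ B ∧ ∀ s ∈ R, a ∉ s) ∧ b ∉ A ∧ b ∉ B ∧ ∀ s ∈ R, b ∉ s := by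
  simp only [Multiset.cons_bind, Cycle.coe_toMultiset, Multiset.nodup_add, Multiset.coe_nodup,
    List.nodup_append, Multiset.disjoint_left, Multiset.mem_add, Multiset.mem_coe,
    Multiset.mem_bind, cycle_mem_toMultiset, List.mem_append, List.mem_singleton] at h
  obtain ⟨⟨-, -, ne_a⟩, ⟨⟨-, -, ne_b⟩, -, disjoint_b⟩, disjoint_a⟩ := h
  have ha := not_or.1 (disjoint_a (.inr rfl))
  exact ⟨⟨fun h => ne_a a h a rfl rfl, fun h => ha.1 (.inl h), fun s hs h => ha.2 ⟨s, hs, h⟩⟩,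
    fun h => disjoint_a (.inl h) (.inl (.inr rfl)), fun h => ne_b b h b rfl rfl,
    fun s hs h => disjoint_b (.inr rfl) ⟨s, hs, h⟩⟩

variable [DecidableEq X] {f : X → X}

theorem comp_swap_apply_of_ne {x : X} (ha : x ≠ a) (hb : x ≠ b) :
    (f ∘ Equiv.swap a b) x = f x := by
  rw [Function.comp_apply, Equiv.swap_apply_of_ne_of_ne ha hb]

theorem isClosedChain_comp_swap_iff_of_notMem {s : Cycle X} (ha : a ∉ s) (hb : b ∉ s) :
    IsClosedChain ((f ∘ Equiv.swap a b) · = ·) s ↔ IsClosedChain (f · = ·) s :=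
  isClosedChain_congr fun _ hx =>
    comp_swap_apply_of_ne (ne_of_mem_of_not_mem hx ha) (ne_of_mem_of_not_mem hx hb)

theorem map_comp_swap_of_notMem {l : List X} (ha : a ∉ l) (hb : b ∉ l) :
    l.map (f ∘ Equiv.swap a b) = l.map f :=
  List.map_congr_left fun _ hx =>
    comp_swap_apply_of_ne (ne_of_mem_of_not_mem hx ha) (ne_of_mem_of_not_mem hx hb)

theorem isClosedChain_append_iff_comp_swap {A B : List X}
    (haA : a ∉ A) (hbA : b ∉ A) (haB : a ∉ B) (hbB : b ∉ B) :
    IsClosedChain (f · = ·) (↑((A ++ [a]) ++ (B ++ [b])) : Cycle X) ↔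
      IsClosedChain ((f ∘ Equiv.swap a b) · = ·) (↑(A ++ [a]) : Cycle X) ∧
        IsClosedChain ((f ∘ Equiv.swap a b) · = ·) (↑(B ++ [b]) : Cycle X) := by
  rw [isClosedChain_concat_append_concat_iff, isClosedChain_concat_iff, isClosedChain_concat_iff,
    map_comp_swap_of_notMem haA hbA, map_comp_swap_of_notMem haB hbB, Function.comp_apply,
    Function.comp_apply, Equiv.swap_apply_left, Equiv.swap_apply_right]

theorem isCycleDecomposition_append_iff_comp_swap [Fintype X] {A B : List X}
    {R : Multiset (Cycle X)} :
    IsCycleDecomposition f (↑((A ++ [a]) ++ (B ++ [b])) ::ₘ R) ↔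
      IsCycleDecomposition (f ∘ Equiv.swap a b) (↑(A ++ [a]) ::ₘ ↑(B ++ [b]) ::ₘ R) := by
  have bind_eq : (↑((A ++ [a]) ++ (B ++ [b])) ::ₘ R).bind Cycle.toMultiset =
      (↑(A ++ [a]) ::ₘ ↑(B ++ [b]) ::ₘ R).bind Cycle.toMultiset := by
    simp only [Multiset.cons_bind, Cycle.coe_toMultiset, ← Multiset.coe_add, add_assoc]
  simp only [isCycleDecomposition_iff, bind_eq, Multiset.forall_mem_cons]
  refine and_congr_left fun exhausts => ?_
  obtain ⟨⟨haA, haB, haR⟩, hbA, hbB, hbR⟩ :=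
    notMem_of_nodup_bind_toMultiset (exhausts ▸ Finset.univ.nodup)
  rw [isClosedChain_append_iff_comp_swap haA hbA haB hbB, and_assoc]
  refine and_congr_right' <| and_congr_right' <| forall₂_congr fun s hs => ?_
  exact (isClosedChain_comp_swap_iff_of_notMem (haR s hs) (hbR s hs)).symm

theorem IsCycleDecomposition.exists_append_of_comp_swap [Fintype X] {S : Multiset (Cycle X)}
    (hab : a ≠ b) (h : IsCycleDecomposition f S) :
    ∃ (A B : List X) (R : Multiset (Cycle X)),
      (S = ↑((A ++ [a]) ++ (B ++ [b])) ::ₘ R ∧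
        IsCycleDecomposition (f ∘ Equiv.swap a b) (↑(A ++ [a]) ::ₘ ↑(B ++ [b]) ::ₘ R)) ∨
      (S = ↑(A ++ [a]) ::ₘ ↑(B ++ [b]) ::ₘ R ∧
        IsCycleDecomposition (f ∘ Equiv.swap a b) (↑((A ++ [a]) ++ (B ++ [b])) ::ₘ R)) := by
  have mem_bind (x : X) : x ∈ S.bind Cycle.toMultiset := h.bind_toMultiset ▸ Finset.mem_univ_val x
  have swap_swap : (f ∘ Equiv.swap a b) ∘ Equiv.swap a b = f := by
    ext x; simp
  obtain ⟨A, B, R, rfl | rfl⟩ :=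
    exists_eq_cons_of_mem_bind_toMultiset hab (mem_bind a) (mem_bind b)
  · exact ⟨A, B, R, .inl ⟨rfl, isCycleDecomposition_append_iff_comp_swap.1 h⟩⟩
  · refine ⟨A, B, R, .inr ⟨rfl, isCycleDecomposition_append_iff_comp_swap.2 ?_⟩⟩
    rwa [swap_swap]

end Swap

section Lift

variable {X Y : Type*}

theorem exists_coe_add_of_map_eq_coe_add {π : X → Y} {U : Multiset X} {l : List Y}
    {T : Multiset Y} (h : U.map π = ↑l + T) :
    ∃ (L : List X) (U' : Multiset X), U = ↑L + U' ∧ L.map π = l ∧ U'.map π = T := by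
  classical
  induction l generalizing U with
  | nil => exact ⟨[], U, by simp, rfl, by simpa using h⟩
  | cons y l ih =>
    rw [← Multiset.cons_coe, Multiset.cons_add] at h
    obtain ⟨x, hx, rfl, hU⟩ := (Multiset.map_eq_cons π U _ _).2 h
    obtain ⟨L, U', hL, rfl, rfl⟩ := ih hU
    refine ⟨x :: L, U', ?_, rfl, rfl⟩
    rw [← Multiset.cons_coe, Multiset.cons_add, ← hL, Multiset.cons_erase hx]

theorem exists_lift_of_map_eq_bind_toMultiset {π : X → Y} {U : Multiset X}
    {M : Multiset (Cycle Y)} (h : U.map π = M.bind Cycle.toMultiset) :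
    ∃ S : Multiset (Cycle X), S.bind Cycle.toMultiset = U ∧ S.map (Cycle.map π) = M := by
  induction M using Multiset.induction_on generalizing U with
  | empty => exact ⟨0, by simpa [eq_comm] using h, rfl⟩
  | cons s M ih =>
    obtain ⟨l, rfl⟩ : ∃ l : List Y, ↑l = s := Quot.exists_rep s
    rw [Multiset.cons_bind, Cycle.coe_toMultiset] at h
    obtain ⟨L, U', rfl, rfl, hU'⟩ := exists_coe_add_of_map_eq_coe_add h
    obtain ⟨S, rfl, rfl⟩ := ih hU'
    exact ⟨↑L ::ₘ S, by simp, by simp⟩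

theorem isClosedChain_formPerm [DecidableEq X] {s : Cycle X} (hs : s.Nodup) (hne : s ≠ Cycle.nil) :
    IsClosedChain (s.formPerm hs · = ·) s := by
  obtain ⟨l⟩ := s
  exact isClosedChain_coe_iff_forall_get.2
    ⟨fun h => hne ((Cycle.coe_eq_nil l).2 h), fun i => l.formPerm_apply_getElem hs i i.2⟩

theorem exists_perm_of_nodup_bind_toMultiset {S : Multiset (Cycle X)}
    (hS : (S.bind Cycle.toMultiset).Nodup) (hne : ∀ s ∈ S, s ≠ Cycle.nil) :
    ∃ F : Equiv.Perm X, (∀ s ∈ S, IsClosedChain (F · = ·) s) ∧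
      ∀ x ∉ S.bind Cycle.toMultiset, F x = x := by
  classical
  induction S using Multiset.induction_on with
  | empty => exact ⟨1, by simp, by simp⟩
  | cons s S ih =>
    rw [Multiset.forall_mem_cons] at hne
    rw [Multiset.cons_bind, Multiset.nodup_add, cycle_nodup_toMultiset] at hS
    obtain ⟨hs, hS, disjoint⟩ := hS
    obtain ⟨F, hF, fixes⟩ := ih hS hne.2
    simp only [Multiset.disjoint_left, cycle_mem_toMultiset] at disjoint
    refine ⟨F * s.formPerm hs, Multiset.forall_mem_cons.2 ⟨?_, fun t ht => ?_⟩, fun x hx => ?_⟩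
    · refine (isClosedChain_congr fun x hx => ?_).2 (isClosedChain_formPerm hs hne.1)
      have formPerm_mem : s.formPerm hs x ∈ s := by
        rw [s.formPerm_apply_mem_eq_next hs x hx]
        exact Cycle.next_mem s hs x hx
      exact fixes _ (disjoint formPerm_mem)
    · refine (isClosedChain_congr fun x hx => congrArg F ?_).2 (hF t ht)
      exact s.formPerm_eq_self_of_notMem hs x fun hxs =>
        disjoint hxs (Multiset.mem_bind.2 ⟨t, ht, cycle_mem_toMultiset.2 hx⟩)
    · rw [Multiset.cons_bind, Multiset.mem_add, cycle_mem_toMultiset, not_or] at hx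
      rw [Equiv.Perm.mul_apply, s.formPerm_eq_self_of_notMem hs x hx.1, fixes x hx.2]

end Lift

section Loop

variable {V E : Type*} {src tgt : E → V}

theorem isLoop_iff_isClosedChain {l : List E} :
    IsLoop src tgt l ↔ IsClosedChain (fun e e' => tgt e = src e') (l : Cycle E) :=
  (isClosedChain_coe_iff_forall_get (r := fun e e' => tgt e = src e')).symm

/-- The cyclic sequence of edges traversed by a loop. -/
def Loop.toCycle_s3 (c : Loop src tgt) : Cycle E :=
  Quotient.lift (s := loopSetoid src tgt) (fun l => (l.1 : Cycle E))
    (fun _ _ h => Cycle.coe_eq_coe.2 h) c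

theorem Loop.toCycle_mk {l : List E} (h : IsLoop src tgt l) :
    (Loop.mk src tgt l h).toCycle_s3 = l :=
  rfl

theorem Loop.toCycle_injective_s3 : Function.Injective (Loop.toCycle_s3 (src := src) (tgt := tgt)) := by
  rintro ⟨l⟩ ⟨m⟩ h
  exact Quotient.sound (s := loopSetoid src tgt) (Cycle.coe_eq_coe.1 h)

theorem Loop.isClosedChain_toCycle (c : Loop src tgt) :
    IsClosedChain (fun e e' => tgt e = src e') c.toCycle_s3 := by
  obtain ⟨l, h⟩ := c
  exact isLoop_iff_isClosedChain.1 h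

instance Loop.canLift : CanLift (Cycle E) (Loop src tgt) Loop.toCycle_s3
    (IsClosedChain fun e e' => tgt e = src e') where
  prf s hs := by
    obtain ⟨l, rfl⟩ : ∃ l : List E, ↑l = s := Quot.exists_rep s
    exact ⟨Loop.mk src tgt l (isLoop_iff_isClosedChain.2 hs), rfl⟩

theorem MultiLoop.edgeCount_eq_count_bind [DecidableEq E] (μ : MultiLoop src tgt) (e : E) :
    μ.edgeCount e = ((μ.map Loop.toCycle_s3).bind Cycle.toMultiset).count e := by
  rw [MultiLoop.edgeCount, Multiset.bind_map, Multiset.count_bind]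
  congr 2
  ext ⟨l⟩
  exact (Multiset.coe_count e l.1).symm

theorem resolutionAt_of_map_toCycle_eq {a b : E} {A B : List E} {R : Multiset (Cycle E)}
    {μ μ' : MultiLoop src tgt}
    (hμ : μ.map Loop.toCycle_s3 = ↑(A ++ [a]) ::ₘ ↑(B ++ [b]) ::ₘ R)
    (hμ' : μ'.map Loop.toCycle_s3 = ↑((A ++ [a]) ++ (B ++ [b])) ::ₘ R) :
    ResolutionAt (tgt a) μ μ' := by
  have isClosedChain_of_mem {ν : MultiLoop src tgt} {s : Cycle E}
      (hs : s ∈ ν.map Loop.toCycle_s3) : IsClosedChain (fun e e' => tgt e = src e') s := by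
    obtain ⟨c, -, rfl⟩ := Multiset.mem_map.1 hs
    exact c.isClosedChain_toCycle
  have h₁ : IsLoop src tgt (A ++ [a]) :=
    isLoop_iff_isClosedChain.2 (isClosedChain_of_mem (ν := μ) (by simp [hμ]))
  have h₂ : IsLoop src tgt (B ++ [b]) :=
    isLoop_iff_isClosedChain.2 (isClosedChain_of_mem (ν := μ) (by simp [hμ]))
  have h₁₂ : IsLoop src tgt ((A ++ [a]) ++ (B ++ [b])) :=
    isLoop_iff_isClosedChain.2 (isClosedChain_of_mem (ν := μ') (by simp [hμ']))
  lift R to MultiLoop src tgt using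
    fun s hs => isClosedChain_of_mem (ν := μ') (by simp [hμ', hs])
  refine ⟨A ++ [a], B ++ [b], h₁, h₂, h₁₂, R, ⟨a, by simp, rfl⟩, ?_,
    Multiset.map_injective Loop.toCycle_injective_s3 (by simpa [Loop.toCycle_mk] using hμ),
    Multiset.map_injective Loop.toCycle_injective_s3 (by simpa [Loop.toCycle_mk] using hμ')⟩
  obtain ⟨e, l, hl⟩ := List.exists_cons_of_ne_nil h₂.1
  rw [hl, isLoop_iff_isClosedChain] at h₁₂
  exact ⟨e, by rw [hl, List.head?_cons], h₁₂.rel_getLast_head.symm⟩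

end Loop

section Matching

variable {V E : Type*} {src tgt : E → V} {α : E → ℕ}

theorem succCopy_coe (σ : MatchingFamily src tgt α) {v : V} (c : InCopies tgt α v) :
    succCopy σ c.1 = (σ v c).1 := by
  obtain ⟨c, rfl⟩ := c
  rfl

theorem src_succCopy (σ : MatchingFamily src tgt α) (c : Copies α) :
    src (succCopy σ c).1 = tgt c.1 :=
  (σ (tgt c.1) ⟨c, rfl⟩).2

theorem succCopy_injective (σ : MatchingFamily src tgt α) : Function.Injective (succCopy σ) := by
  intro c d h
  have tgt_eq : tgt c.1 = tgt d.1 := by rw [← src_succCopy σ, h, src_succCopy σ]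
  have matched_eq : σ (tgt d.1) ⟨c, tgt_eq⟩ = σ (tgt d.1) ⟨d, rfl⟩ :=
    Subtype.ext (by rwa [← succCopy_coe, ← succCopy_coe])
  exact congrArg Subtype.val ((σ _).injective matched_eq)

theorem exists_matchingFamily_succCopy_eq (F : Equiv.Perm (Copies α))
    (hF : ∀ c, src (F c).1 = tgt c.1) : ∃ σ : MatchingFamily src tgt α, succCopy σ = F :=
  ⟨fun v => F.subtypeEquiv fun c => by rw [hF], rfl⟩

theorem succCopy_eq_comp_swap [DecidableEq E] {σ σ' : MatchingFamily src tgt α} {v : V}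
    {a b : InCopies tgt α v} (hv : σ' v = (Equiv.swap a b).trans (σ v))
    (hw : ∀ w, w ≠ v → σ' w = σ w) : succCopy σ' = succCopy σ ∘ Equiv.swap a.1 b.1 := by
  ext1 c
  by_cases hc : tgt c.1 = v
  · lift c to InCopies tgt α v using hc
    rw [Function.comp_apply, succCopy_coe, hv, Equiv.trans_apply, ← succCopy_coe,
      Subtype.val_injective.map_swap]
  · have ne_of_tgt (d : InCopies tgt α v) : c ≠ d.1 := fun h => hc (h ▸ d.2)
    rw [comp_swap_apply_of_ne (ne_of_tgt a) (ne_of_tgt b), succCopy, succCopy, hw _ hc]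

theorem isSigmaCycle_iff_isClosedChain {σ : MatchingFamily src tgt α} {L : List (Copies α)} :
    IsSigmaCycle σ L ↔ IsClosedChain (succCopy σ · = ·) (L : Cycle (Copies α)) := by
  simp only [isClosedChain_coe_iff_forall_get, IsSigmaCycle, eq_comm]

theorem IsClosedChain.map_fst_of_succCopy {σ : MatchingFamily src tgt α} {s : Cycle (Copies α)}
    (hs : IsClosedChain (succCopy σ · = ·) s) :
    IsClosedChain (fun e e' => tgt e = src e') (s.map Sigma.fst) :=
  (isClosedChain_map Sigma.fst).2 (hs.of_forall_apply fun c => (src_succCopy σ c).symm)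

end Matching

section Traces

variable {V E : Type*} {src tgt : E → V} {α : E → ℕ} {σ : MatchingFamily src tgt α}
  {μ : MultiLoop src tgt}

/-- The based cycles of edge-copies out of which `Traces σ` assembles a multi-loop. -/
abbrev TracedList (σ : MatchingFamily src tgt α) : Type _ :=
  {L : List (Copies α) // IsSigmaCycle σ L ∧ IsLoop src tgt (L.map Sigma.fst)}

instance TracedList.canLift : CanLift (Cycle (Copies α)) (TracedList σ) (fun L => ↑L.1)
    (IsClosedChain (succCopy σ · = ·)) where
  prf s hs := by
    obtain ⟨L, rfl⟩ : ∃ L : List (Copies α), ↑L = s := Quot.exists_rep s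
    exact ⟨⟨L, isSigmaCycle_iff_isClosedChain.2 hs,
      isLoop_iff_isClosedChain.2 hs.map_fst_of_succCopy⟩, rfl⟩

theorem TracedList.isCycleDecomposition_map_iff [DecidableEq E] [Fintype (Copies α)]
    {Ls : Multiset (TracedList σ)} :
    IsCycleDecomposition (succCopy σ) (Ls.map fun L => ↑L.1) ↔
      ∀ c, (Ls.map fun L => L.1.count c).sum = 1 := by
  have isClosedChain : ∀ s ∈ Ls.map (fun L => (L.1 : Cycle (Copies α))),
      IsClosedChain (succCopy σ · = ·) s := by
    simp only [Multiset.mem_map]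
    rintro _ ⟨L, -, rfl⟩
    exact isSigmaCycle_iff_isClosedChain.1 L.2.1
  rw [isCycleDecomposition_iff, and_iff_right isClosedChain]
  simp [Multiset.ext, Multiset.bind_map, Multiset.count_bind]

variable [DecidableEq E]

theorem traces_iff_exists_isCycleDecomposition [Fintype (Copies α)] :
    Traces σ μ ↔ ∃ S : Multiset (Cycle (Copies α)), IsCycleDecomposition (succCopy σ) S ∧
      μ.map Loop.toCycle_s3 = S.map (Cycle.map Sigma.fst) := by
  have map_toCycle_mk (Ls : Multiset (TracedList σ)) :
      (Ls.map fun L => Loop.mk src tgt (L.1.map Sigma.fst) L.2.2).map Loop.toCycle_s3 =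
        (Ls.map fun L => (L.1 : Cycle (Copies α))).map (Cycle.map Sigma.fst) := by
    simp only [Multiset.map_map, Function.comp_def, Loop.toCycle_mk, Cycle.map_coe]
  constructor
  · rintro ⟨Ls, uses_once, rfl⟩
    exact ⟨_, TracedList.isCycleDecomposition_map_iff.2 uses_once, map_toCycle_mk Ls⟩
  · rintro ⟨S, hS, hμ⟩
    lift S to Multiset (TracedList σ) using hS.isClosedChain
    refine ⟨S, TracedList.isCycleDecomposition_map_iff.1 hS, ?_⟩
    exact Multiset.map_injective Loop.toCycle_injective_s3 (hμ.trans (map_toCycle_mk S).symm)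

theorem traces_iff_map_toCycle_eq [Fintype (Copies α)] :
    Traces σ μ ↔
      μ.map Loop.toCycle_s3 = (orbitCycles (succCopy σ)).map (Cycle.map Sigma.fst) := by
  rw [traces_iff_exists_isCycleDecomposition]
  constructor
  · rintro ⟨S, hS, hμ⟩
    rwa [← hS.eq_orbitCycles]
  · exact fun hμ => ⟨_, isCycleDecomposition_orbitCycles (succCopy_injective σ), hμ⟩

theorem Traces.map_toCycle_eq [Fintype (Copies α)] {S : Multiset (Cycle (Copies α))}
    (h : Traces σ μ) (hS : IsCycleDecomposition (succCopy σ) S) :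
    μ.map Loop.toCycle_s3 = S.map (Cycle.map Sigma.fst) := by
  rw [hS.eq_orbitCycles, traces_iff_map_toCycle_eq.1 h]

theorem count_map_fst_univ [Fintype (Copies α)] (e : E) :
    ((Finset.univ : Finset (Copies α)).val.map Sigma.fst).count e = α e := by
  rw [Multiset.count_map]
  calc _ = Fintype.card {c : Copies α // c.1 = e} := by
        simp only [Fintype.card_subtype, Finset.card_def, Finset.filter_val, eq_comm]
    _ = α e := by
        rw [Fintype.card_congr (Equiv.sigmaSubtype e), Fintype.card_fin]

variable [Finite (Copies α)]

theorem existsUnique_traces (σ : MatchingFamily src tgt α) :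
    ∃! μ : MultiLoop src tgt, Traces σ μ := by
  have := Fintype.ofFinite (Copies α)
  have isClosedChain_of_mem : ∀ s ∈ (orbitCycles (succCopy σ)).map (Cycle.map Sigma.fst),
      IsClosedChain (fun e e' => tgt e = src e') s := by
    simp only [Multiset.mem_map]
    rintro _ ⟨s, hs, rfl⟩
    exact ((isCycleDecomposition_orbitCycles (succCopy_injective σ)).isClosedChain s
      hs).map_fst_of_succCopy
  simp only [traces_iff_map_toCycle_eq]
  lift (orbitCycles (succCopy σ)).map (Cycle.map Sigma.fst) to MultiLoop src tgt
    using isClosedChain_of_mem with μ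
  exact ⟨μ, rfl, fun _ h => Multiset.map_injective Loop.toCycle_injective_s3 h⟩

theorem Traces.edgeCount_eq (h : Traces σ μ) (e : E) : μ.edgeCount e = α e := by
  have := Fintype.ofFinite (Copies α)
  obtain ⟨S, hS, hμ⟩ := traces_iff_exists_isCycleDecomposition.1 h
  rw [MultiLoop.edgeCount_eq_count_bind, hμ, Multiset.bind_map]
  simp only [cycle_toMultiset_map]
  rw [← Multiset.map_bind, hS.bind_toMultiset, count_map_fst_univ]

theorem exists_matchingFamily_traces (hμ : ∀ e, μ.edgeCount e = α e) :
    ∃ σ : MatchingFamily src tgt α, Traces σ μ := by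
  have := Fintype.ofFinite (Copies α)
  have map_fst_univ : (Finset.univ : Finset (Copies α)).val.map Sigma.fst =
      (μ.map Loop.toCycle_s3).bind Cycle.toMultiset := by
    ext e
    rw [count_map_fst_univ, ← MultiLoop.edgeCount_eq_count_bind, hμ]
  obtain ⟨S, hSU, hSμ⟩ := exists_lift_of_map_eq_bind_toMultiset map_fst_univ
  have isClosedChain_of_mem (s : Cycle (Copies α)) (hs : s ∈ S) :
      IsClosedChain (fun c d => tgt c.1 = src d.1) s := by
    obtain ⟨c, -, hc⟩ := Multiset.mem_map.1 (hSμ ▸ Multiset.mem_map_of_mem (Cycle.map Sigma.fst) hs)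
    exact (isClosedChain_map Sigma.fst).1 (hc ▸ c.isClosedChain_toCycle)
  obtain ⟨F, hF, -⟩ := exists_perm_of_nodup_bind_toMultiset (hSU ▸ Finset.univ.nodup)
    fun s hs => (isClosedChain_of_mem s hs).1
  have decomposition : IsCycleDecomposition F S := ⟨hF, hSU⟩
  obtain ⟨σ, hσ⟩ : ∃ σ : MatchingFamily src tgt α, succCopy σ = F := by
    refine exists_matchingFamily_succCopy_eq F fun c => ?_
    obtain ⟨s, hs, hc⟩ := decomposition.exists_mem c
    exact ((hF s hs).rel_apply (isClosedChain_of_mem s hs) hc).symm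
  exact ⟨σ, traces_iff_exists_isCycleDecomposition.2 ⟨S, hσ ▸ decomposition, hSμ.symm⟩⟩

theorem Traces.resolutionAt_or_resolutionAt {σ' : MatchingFamily src tgt α} {v : V}
    {a b : InCopies tgt α v} (hab : a ≠ b) (hv : σ' v = (Equiv.swap a b).trans (σ v))
    (hw : ∀ w, w ≠ v → σ' w = σ w) {μ' : MultiLoop src tgt} (h : Traces σ μ)
    (h' : Traces σ' μ') : ResolutionAt v μ μ' ∨ ResolutionAt v μ' μ := by
  have := Fintype.ofFinite (Copies α)
  have decomposition := isCycleDecomposition_orbitCycles (succCopy_injective σ)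
  obtain ⟨A, B, R, h_or⟩ := decomposition.exists_append_of_comp_swap (Subtype.coe_ne_coe.2 hab)
  rw [← succCopy_eq_comp_swap hv hw] at h_or
  have resolutionAt_of_split_of_merged {τ τ' : MatchingFamily src tgt α}
      {ν ν' : MultiLoop src tgt} (hν : Traces τ ν) (hν' : Traces τ' ν')
      (split : IsCycleDecomposition (succCopy τ) (↑(A ++ [a.1]) ::ₘ ↑(B ++ [b.1]) ::ₘ R))
      (merged : IsCycleDecomposition (succCopy τ') (↑((A ++ [a.1]) ++ (B ++ [b.1])) ::ₘ R)) :
      ResolutionAt v ν ν' := by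
    have split_eq := hν.map_toCycle_eq split
    have merged_eq := hν'.map_toCycle_eq merged
    simp only [Multiset.map_cons, Cycle.map_coe, List.map_append, List.map_singleton]
      at split_eq merged_eq
    exact a.2 ▸ resolutionAt_of_map_toCycle_eq split_eq merged_eq
  rcases h_or with ⟨merged_eq, split⟩ | ⟨split_eq, merged⟩
  · exact .inr (resolutionAt_of_split_of_merged h' h split (merged_eq ▸ decomposition))
  · exact .inl (resolutionAt_of_split_of_merged h h' (split_eq ▸ decomposition) merged)

end Traces

theorem matching_family_multiloop_general {V E : Type*} [DecidableEq E] (src tgt : E → V)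
    (α : E → ℕ) [Finite (Copies α)] :
    ((∀ σ : MatchingFamily src tgt α, ∃! μ : MultiLoop src tgt, Traces σ μ) ∧
      (∀ (σ : MatchingFamily src tgt α) (μ : MultiLoop src tgt), Traces σ μ →
        ∀ e : E, MultiLoop.edgeCount μ e = α e)) ∧
    (∀ μ : MultiLoop src tgt, (∀ e : E, MultiLoop.edgeCount μ e = α e) →
      ∃ σ : MatchingFamily src tgt α, Traces σ μ) ∧
    (∀ (σ σ' : MatchingFamily src tgt α) (v : V),
      (∃ a b : InCopies tgt α v, a ≠ b ∧ σ' v = (Equiv.swap a b).trans (σ v)) →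
      (∀ w : V, w ≠ v → σ' w = σ w) →
      ∀ μ μ' : MultiLoop src tgt, Traces σ μ → Traces σ' μ' →
        ResolutionAt v μ μ' ∨ ResolutionAt v μ' μ) :=
  ⟨⟨existsUnique_traces, fun _ _ => Traces.edgeCount_eq⟩,
    fun _ => exists_matchingFamily_traces,
    fun _ _ _ ⟨_, _, hab, hv⟩ hw _ _ h h' => h.resolutionAt_or_resolutionAt hab hv hw h'⟩

/-- Let `α` satisfy the Kirchhoff condition. Then:
(a) every family of matchings traces out a unique multi-loop, and any multi-loop traced
by a family of matchings has edge multiplicity function `α`;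
(b) every multi-loop with edge multiplicity function `α` is traced by some family of
matchings;
(c) if two families of matchings agree except that at a single vertex `v` they differ by
precomposition with a single transposition, then the multi-loops they trace are related
by a resolution at `v`. -/
theorem matching_family_multiloop {V E : Type*} [Fintype V] [Fintype E]
    [DecidableEq V] [DecidableEq E]
    (src tgt : E → V) (α : E → ℕ)
    (hK : ∀ v : V,
      ∑ e ∈ Finset.univ.filter (fun e => tgt e = v), α e =
        ∑ e ∈ Finset.univ.filter (fun e => src e = v), α e) :
    -- (a)
    ((∀ σ : MatchingFamily src tgt α, ∃! μ : MultiLoop src tgt, Traces σ μ) ∧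
      (∀ (σ : MatchingFamily src tgt α) (μ : MultiLoop src tgt), Traces σ μ →
        ∀ e : E, MultiLoop.edgeCount μ e = α e)) ∧
    -- (b)
    (∀ μ : MultiLoop src tgt, (∀ e : E, MultiLoop.edgeCount μ e = α e) →
      ∃ σ : MatchingFamily src tgt α, Traces σ μ) ∧
    -- (c)
    (∀ (σ σ' : MatchingFamily src tgt α) (v : V),
      (∃ a b : InCopies tgt α v, a ≠ b ∧ σ' v = (Equiv.swap a b).trans (σ v)) →
      (∀ w : V, w ≠ v → σ' w = σ w) →
      ∀ μ μ' : MultiLoop src tgt, Traces σ μ → Traces σ' μ' →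
        ResolutionAt v μ μ' ∨ ResolutionAt v μ' μ) :=
  matching_family_multiloop_general src tgt α
end

section
/- Let X be a set, let S be a set each of whose elements is labelled either 'red' or 'blue', and suppose that for each s ∈ S we are given subsets D_s, R_s ⊆ X with D_s ∩ R_s = ∅ together with a bijection f_s : D_s → R_s. Assume: (i) every x ∈ X lies in D_s ∪ R_s for only finitely many s ∈ S; (ii) for all distinct s, s' ∈ S, f_s maps D_s ∩ D_{s'} onto R_s ∩ D_{s'} and maps D_s ∩ R_{s'} onto R_s ∩ R_{s'}; and (iii) for all distinct s, s' ∈ S and every x ∈ D_s ∩ D_{s'}, one has f_s(f_{s'}(x)) = f_{s'}(f_s(x)). Let V be the 𝔽₂-vector space with basis X and define the linear map ∂ : V → V on basis elements by ∂x = Σ_{s red, x ∈ D_s} f_s(x) + Σ_{s blue, x ∈ R_s} f_s^{-1}(x). Then ∂ ∘ ∂ = 0, so (V, ∂) is a chain complex. -/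
/-!
Replace `f s` by its inverse whenever `s` is blue, so that `d x` becomes the sum of `e s x` over all
`s` with `x` in the domain of `e s`. Strumming `x` across `s` removes `s`, and no other sector, from
the set of sectors across which `x` can be strummed. Hence `d (d x)` is the sum of `e s' (e s x)`
over the ordered pairs of distinct sectors available at `x`, and the pairs `(s, s')` and `(s', s)`
contribute the same basis element, which cancels in characteristic two.
-/

theorem sum_sum_erase_eq_zero_of_symm {ι M : Type*} [DecidableEq ι] [AddCommMonoid M]
    (add_self : ∀ m : M, m + m = 0) (T : Finset ι) (F : ι → ι → M)
    (symm : ∀ i ∈ T, ∀ j ∈ T, i ≠ j → F i j = F j i) :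
    ∑ i ∈ T, ∑ j ∈ T.erase i, F i j = 0 := by
  have mem_pairs (i j : ι) : (⟨i, j⟩ : Σ _ : ι, ι) ∈ T.sigma T.erase ↔ i ∈ T ∧ j ≠ i ∧ j ∈ T := by
    simp
  rw [Finset.sum_sigma']
  refine Finset.sum_involution (fun p _ => ⟨p.2, p.1⟩) ?cancel ?no_fixed_point ?mem ?involutive
  case cancel =>
    rintro ⟨i, j⟩ hp
    obtain ⟨hi, hji, hj⟩ := (mem_pairs i j).1 hp
    rw [symm i hi j hj hji.symm, add_self]
  case no_fixed_point =>
    rintro ⟨i, j⟩ hp - heq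
    obtain ⟨-, hji, -⟩ := (mem_pairs i j).1 hp
    exact hji (congrArg Sigma.fst heq)
  case mem =>
    rintro ⟨i, j⟩ hp
    obtain ⟨hi, hji, hj⟩ := (mem_pairs i j).1 hp
    exact (mem_pairs j i).2 ⟨hj, hji.symm, hi⟩
  case involutive => exact fun _ _ => rfl

/-- A family of partially defined self-maps `h s : A s → X` whose iterates at any point span a
combinatorial cube: no map can be applied twice in a row, applying one map does not affect whether
another one can be applied, and the order of application is irrelevant. The maps are encoded as
total functions, whose values outside `A s` play no role. -/
structure IsCubical {X S : Type*} (A : S → Set X) (h : S → X → X) : Prop where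
  apply_notMem : ∀ s, ∀ x ∈ A s, h s x ∉ A s
  apply_mem_iff : ∀ s s', s ≠ s' → ∀ x ∈ A s, (h s x ∈ A s' ↔ x ∈ A s')
  comm : ∀ s s', s ≠ s' → ∀ x ∈ A s ∩ A s', h s (h s' x) = h s' (h s x)

namespace IsCubical

variable {X S : Type*} {A : S → Set X} {h : S → X → X}

theorem setOf_apply_mem (hA : IsCubical A h) {s : S} {x : X} (hx : x ∈ A s) :
    {s' | h s x ∈ A s'} = {s' | x ∈ A s'} \ {s} := by
  ext s'
  rcases eq_or_ne s s' with rfl | hne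
  · simpa using hA.apply_notMem s x hx
  · simpa [hne.symm] using hA.apply_mem_iff s s' hne x hx

theorem comp_self_eq_zero {k : Type*} [Semiring k] [CharP k 2] (hA : IsCubical A h)
    (hfin : ∀ x, {s | x ∈ A s}.Finite) (d : (X →₀ k) →ₗ[k] (X →₀ k))
    (hd : ∀ x, d (Finsupp.single x 1) =
      ∑ᶠ s ∈ {s | x ∈ A s}, Finsupp.single (h s x) (1 : k)) :
    d ∘ₗ d = 0 := by
  classical
  refine Finsupp.lhom_ext' fun x => LinearMap.ext_ring ?_
  change d (d (Finsupp.single x 1)) = 0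
  set T : Finset S := (hfin x).toFinset with hT
  have mem_T {s : S} : s ∈ T ↔ x ∈ A s := by simp [hT]
  have d_apply : ∀ s ∈ T, d (Finsupp.single (h s x) 1) =
      ∑ s' ∈ T.erase s, Finsupp.single (h s' (h s x)) (1 : k) := by
    intro s hs
    have available : {s' | h s x ∈ A s'} = ↑(T.erase s) := by
      rw [hA.setOf_apply_mem (mem_T.1 hs), Finset.coe_erase, hT, Set.Finite.coe_toFinset]
    rw [hd, available, finsum_mem_coe_finset]
  have add_self (m : X →₀ k) : m + m = 0 := by
    ext
    exact CharTwo.add_self_eq_zero _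
  calc d (d (Finsupp.single x 1))
      = ∑ s ∈ T, d (Finsupp.single (h s x) 1) := by
        rw [hd, finsum_mem_eq_finite_toFinset_sum _ (hfin x), map_sum]
    _ = ∑ s ∈ T, ∑ s' ∈ T.erase s, Finsupp.single (h s' (h s x)) (1 : k) :=
        Finset.sum_congr rfl d_apply
    _ = 0 := sum_sum_erase_eq_zero_of_symm add_self T _ fun s hs s' hs' hne => by
        rw [hA.comm s s' hne x ⟨mem_T.1 hs, mem_T.1 hs'⟩]

end IsCubical

/-- Two partial bijections of `X` commute as strums across distinct sectors do: each of them
preserves the membership of a point in the source and in the target of the other, and they commute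
wherever both are defined. -/
structure StrumsCommute {X : Type*} (e e' : PartialEquiv X X) : Prop where
  isImage_source_right : e.IsImage e'.source e'.source
  isImage_target_right : e.IsImage e'.target e'.target
  isImage_source_left : e'.IsImage e.source e.source
  isImage_target_left : e'.IsImage e.target e.target
  comm : ∀ x ∈ e.source ∩ e'.source, e (e' x) = e' (e x)

/-- The partial bijection contributing to the differential at a sector with partial bijection `e`:
`e` itself at a red sector (`true`), its inverse at a blue one (`false`). -/
def orient {X : Type*} (color : Bool) (e : PartialEquiv X X) : PartialEquiv X X :=
  cond color e e.symm

namespace StrumsCommute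

variable {X : Type*} {e e' : PartialEquiv X X}

theorem swap (h : StrumsCommute e e') : StrumsCommute e' e where
  isImage_source_right := h.isImage_source_left
  isImage_target_right := h.isImage_target_left
  isImage_source_left := h.isImage_source_right
  isImage_target_left := h.isImage_target_right
  comm x hx := (h.comm x hx.symm).symm

theorem symm_left (h : StrumsCommute e e') : StrumsCommute e.symm e' where
  isImage_source_right := h.isImage_source_right.symm
  isImage_target_right := h.isImage_target_right.symm
  isImage_source_left := h.isImage_target_left
  isImage_target_left := h.isImage_source_left
  comm x := by
    rintro ⟨hx, hx'⟩
    have hy : e.symm x ∈ e.source := e.map_target hx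
    have hy' : e.symm x ∈ e'.source := (h.isImage_source_right.symm hx).2 hx'
    calc e.symm (e' x)
        = e.symm (e' (e (e.symm x))) := by rw [e.right_inv hx]
      _ = e.symm (e (e' (e.symm x))) := by rw [h.comm _ ⟨hy, hy'⟩]
      _ = e' (e.symm x) := e.left_inv ((h.isImage_source_left hy').2 hy)

theorem orient_left (h : StrumsCommute e e') (color : Bool) :
    StrumsCommute (orient color e) e' := by
  cases color
  exacts [h.symm_left, h]

theorem orient (h : StrumsCommute e e') (color color' : Bool) :
    StrumsCommute (orient color e) (orient color' e') :=
  ((h.orient_left color).swap.orient_left color').swap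

end StrumsCommute

theorem isCubical_of_pairwise_strumsCommute {X S : Type*} {e : S → PartialEquiv X X}
    (hdisj : ∀ s, Disjoint (e s).source (e s).target)
    (hcomm : Pairwise fun s s' => StrumsCommute (e s) (e s')) :
    IsCubical (fun s => (e s).source) (fun s => e s) where
  apply_notMem s _ hx := (hdisj s).notMem_of_mem_right ((e s).map_source hx)
  apply_mem_iff _ _ hne _ hx := (hcomm hne).isImage_source_right hx
  comm _ _ hne := (hcomm hne).comm

theorem disjoint_orient_source_target {X : Type*} {e : PartialEquiv X X}
    (h : Disjoint e.source e.target) (color : Bool) :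
    Disjoint (orient color e).source (orient color e).target := by
  cases color
  exacts [h.symm, h]

theorem orient_source_subset {X : Type*} (color : Bool) (e : PartialEquiv X X) :
    (orient color e).source ⊆ e.source ∪ e.target := by
  cases color
  exacts [Set.subset_union_right, Set.subset_union_left]

theorem finsum_mem_orient_source {X S M : Type*} [AddCommMonoid M] (color : S → Bool)
    (e : S → PartialEquiv X X) (x : X) (hfin : {s | x ∈ (orient (color s) (e s)).source}.Finite)
    (F : X → M) :
    ∑ᶠ s ∈ {s | x ∈ (orient (color s) (e s)).source}, F (orient (color s) (e s) x) =
      (∑ᶠ s ∈ {s | color s = true ∧ x ∈ (e s).source}, F (e s x)) +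
        ∑ᶠ s ∈ {s | color s = false ∧ x ∈ (e s).target}, F ((e s).symm x) := by
  set red : Set S := {s | color s = true ∧ x ∈ (e s).source}
  set blue : Set S := {s | color s = false ∧ x ∈ (e s).target}
  have split : {s | x ∈ (orient (color s) (e s)).source} = red ∪ blue := by
    ext s
    cases hs : color s <;> simp [red, blue, orient, hs]
  have disjoint : Disjoint red blue :=
    Set.disjoint_left.2 fun s hred hblue => nomatch hred.1.symm.trans hblue.1
  rw [split] at hfin ⊢
  rw [finsum_mem_union disjoint (hfin.subset Set.subset_union_left)
    (hfin.subset Set.subset_union_right)]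
  congr 1
  · exact finsum_mem_congr rfl fun s hs => by rw [hs.1, orient, cond_true]
  · exact finsum_mem_congr rfl fun s hs => by rw [hs.1, orient, cond_false]

theorem strumming_differential_squares_to_zero_general
    {X S k : Type*} [Semiring k] [CharP k 2] (color : S → Bool)
    (D R : S → Set X) (f g : S → X → X)
    (hdisj : ∀ s : S, D s ∩ R s = ∅)
    (hf : ∀ s : S, ∀ x ∈ D s, f s x ∈ R s ∧ g s (f s x) = x)
    (hg : ∀ s : S, ∀ x ∈ R s, g s x ∈ D s ∧ f s (g s x) = x)
    (hfin : ∀ x : X, {s : S | x ∈ D s ∪ R s}.Finite)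
    (hinter : ∀ s s' : S, s ≠ s' →
      f s '' (D s ∩ D s') = R s ∩ D s' ∧ f s '' (D s ∩ R s') = R s ∩ R s')
    (hcomm : ∀ s s' : S, s ≠ s' → ∀ x ∈ D s ∩ D s', f s (f s' x) = f s' (f s x))
    (d : (X →₀ k) →ₗ[k] (X →₀ k))
    (hd : ∀ x : X,
      d (Finsupp.single x 1) =
        (∑ᶠ s ∈ {s : S | color s = true ∧ x ∈ D s},
            Finsupp.single (f s x) (1 : k)) +
          ∑ᶠ s ∈ {s : S | color s = false ∧ x ∈ R s},
            Finsupp.single (g s x) (1 : k)) :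
    ∀ m : X →₀ k, d (d m) = 0 := by
  let strum (s : S) : PartialEquiv X X :=
    { toFun := f s
      invFun := g s
      source := D s
      target := R s
      map_source' := fun x hx => (hf s x hx).1
      map_target' := fun x hx => (hg s x hx).1
      left_inv' := fun x hx => (hf s x hx).2
      right_inv' := fun x hx => (hg s x hx).2 }
  have strums_commute : Pairwise fun s s' => StrumsCommute (strum s) (strum s') := fun s s' hne =>
    { isImage_source_right := .of_image_eq (hinter s s' hne).1
      isImage_target_right := .of_image_eq (hinter s s' hne).2
      isImage_source_left := .of_image_eq (hinter s' s hne.symm).1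
      isImage_target_left := .of_image_eq (hinter s' s hne.symm).2
      comm := hcomm s s' hne }
  have cubical := isCubical_of_pairwise_strumsCommute
    (fun s => disjoint_orient_source_target
      (e := strum s) (Set.disjoint_iff_inter_eq_empty.2 (hdisj s)) (color s))
    fun s s' hne => (strums_commute hne).orient (color s) (color s')
  have finite_available (x : X) : {s | x ∈ (orient (color s) (strum s)).source}.Finite :=
    (hfin x).subset fun s hs => orient_source_subset (color s) (strum s) hs
  exact LinearMap.congr_fun <| cubical.comp_self_eq_zero finite_available d fun x => (hd x).trans
    (finsum_mem_orient_source color strum x (finite_available x) (Finsupp.single · 1)).symm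

/-- Let `X` be a set and `S` a set of "sectors", each coloured red
(`color s = true`) or blue (`color s = false`), with disjoint subsets `D s, R s ⊆ X` and
a bijection `f s : D s → R s` (with inverse `g s`) for each `s`.  Assume each `x ∈ X`
lies in `D s ∪ R s` for only finitely many `s`, that for distinct `s, s'` the map `f s`
sends `D s ∩ D s'` onto `R s ∩ D s'` and `D s ∩ R s'` onto `R s ∩ R s'`, and that the
maps `f s`, `f s'` commute on `D s ∩ D s'`.  Then the linear endomorphism `d` of the
`𝔽₂`-vector space with basis `X` defined on basis elements by
`d x = Σ_{s red, x ∈ D s} f s x + Σ_{s blue, x ∈ R s} g s x` satisfies `d ∘ d = 0`. -/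
theorem strumming_differential_squares_to_zero
    {X S : Type*} (color : S → Bool) (D R : S → Set X) (f g : S → X → X)
    (hdisj : ∀ s : S, D s ∩ R s = ∅)
    (hf : ∀ s : S, ∀ x ∈ D s, f s x ∈ R s ∧ g s (f s x) = x)
    (hg : ∀ s : S, ∀ x ∈ R s, g s x ∈ D s ∧ f s (g s x) = x)
    (hfin : ∀ x : X, {s : S | x ∈ D s ∪ R s}.Finite)
    (hinter : ∀ s s' : S, s ≠ s' →
      f s '' (D s ∩ D s') = R s ∩ D s' ∧ f s '' (D s ∩ R s') = R s ∩ R s')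
    (hcomm : ∀ s s' : S, s ≠ s' → ∀ x ∈ D s ∩ D s', f s (f s' x) = f s' (f s x))
    (d : (X →₀ ZMod 2) →ₗ[ZMod 2] (X →₀ ZMod 2))
    (hd : ∀ x : X,
      d (Finsupp.single x 1) =
        (∑ᶠ s ∈ {s : S | color s = true ∧ x ∈ D s},
            Finsupp.single (f s x) (1 : ZMod 2)) +
          ∑ᶠ s ∈ {s : S | color s = false ∧ x ∈ R s},
            Finsupp.single (g s x) (1 : ZMod 2)) :
    ∀ m : X →₀ ZMod 2, d (d m) = 0 := by
  exact strumming_differential_squares_to_zero_general color D R f g hdisj hf hg hfin hinter hcomm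
    d hd
end
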